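/- Let Ω ⊂ ℝ² be a compact convex set of positive measure, let D = [−1,1]² ⊂ ℝ², and let Q ⊂ (0,∞) be a uniformly discrete set. Then the union of dilated square boundaries P = Q∂D is a sampling set for B_Ω if and only if (d⁻(Q), 0) ∉ Ω − Ω and (0, d⁻(Q)) ∉ Ω − Ω. -/

import Mathlib

open MeasureTheory FourierTransform Filter Metric
open scoped Pointwise RealInnerProductSpace ENNReal NNReal

noncomputable section

variable {V : Type*} [NormedAddCommGroup V] [InnerProductSpace ℝ V]
  [FiniteDimensional ℝ V] [MeasurableSpace V] [BorelSpace V]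

/-- `f` belongs to the Bernstein space `B_Ω`: it is a continuous bounded function which is the
inverse Fourier transform of a tempered distribution supported in `Ω`, i.e. its distributional
Fourier transform annihilates every test function whose support is disjoint from `Ω`. -/
def MemBernstein (Ω : Set V) (f : V → ℂ) : Prop :=
  Continuous f ∧ (∃ C, ∀ x, ‖f x‖ ≤ C) ∧
    ∀ ψ : V → ℂ, ContDiff ℝ (⊤ : ℕ∞) ψ → HasCompactSupport ψ → tsupport ψ ∩ Ω = ∅ →
      ∫ x, f x * 𝓕 ψ x = 0

/-- `P` is a sampling set for the Bernstein space `B_Ω`: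
`‖f‖_∞ ≤ C · sup_{x ∈ P} ‖f x‖` for all `f ∈ B_Ω`. -/
def IsSamplingSet (Ω P : Set V) : Prop :=
  ∃ C > 0, ∀ f : V → ℂ, MemBernstein Ω f →
    ∀ x : V, ‖f x‖ ≤ C * sSup ((fun p => ‖f p‖) '' P)

/-- A set is uniformly discrete if distinct points are separated by a fixed positive distance. -/
def UniformlyDiscrete {X : Type*} [PseudoMetricSpace X] (Λ : Set X) : Prop :=
  ∃ δ > 0, ∀ x ∈ Λ, ∀ y ∈ Λ, x ≠ y → δ ≤ dist x y

/-- The lower uniform (Beurling) density of a set: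
`D⁻(Λ) = lim_{r→∞} inf_x #(Λ ∩ B_r(x)) / |B_r(x)|`. -/
def lowerUniformDensity {X : Type*} [NormedAddCommGroup X] [MeasureSpace X] (Λ : Set X) : ℝ :=
  liminf (fun r : ℝ => ⨅ x : X,
    (Nat.card ↥(Λ ∩ closedBall x r) : ℝ) / (volume (closedBall x r)).toReal) atTop

/-!
Sufficiency: a function in the Bernstein space restricts to every line as an entire function of
exponential type, so by Jensen's formula it cannot vanish on a subset of the line whose density
exceeds the width of `Ω` in that direction; compactness of bounded sets of the Bernstein space and
a passage to limits of translates turn this uniqueness statement into the sampling inequality.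

Necessity: a sparse window of `Q ∪ -Q` carries a function of one coordinate, of bandwidth barely
above the density, which vanishes at the points of `Q ∪ -Q` in the window and is small outside it;
a sinc factor in the other coordinate makes it small on the dilated squares. Averaging dyadic
contractions of this function brings its spectrum into `Ω` at the cost of a small error.
-/

section Jensen

lemma one_le_divisor_of_apply_eq_zero {F : ℂ → ℂ} (hF : Differentiable ℂ F) {w z : ℂ}
    (hw : F w ≠ 0) (hz : F z = 0) {U : Set ℂ} (hzU : z ∈ U) :
    1 ≤ MeromorphicOn.divisor F U z := by
  have hA : AnalyticOnNhd ℂ F Set.univ := fun z _ => hF.analyticAt z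
  rw [MeromorphicOn.AnalyticOnNhd.divisor_apply (hA.mono (Set.subset_univ U)) hzU]
  have hpos : analyticOrderAt F z ≠ 0 := (hF.analyticAt z).analyticOrderAt_ne_zero.2 hz
  have hfin : analyticOrderAt F z ≠ ⊤ := fun h => hw <| congrFun
    (AnalyticOnNhd.eq_of_eventuallyEq hA (fun _ _ => analyticAt_const (v := (0 : ℂ)))
      (analyticOrderAt_eq_top.1 h)) w
  lift analyticOrderAt F z to ℕ using hfin with n
  simpa [Nat.one_le_iff_ne_zero] using hpos

-- Jensen's formula, in which the zeros outside `Z` contribute non-negative terms.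
lemma sum_log_add_log_norm_le_circleAverage {F : ℂ → ℂ} (hF : Differentiable ℂ F) (h0 : F 0 ≠ 0)
    {R : ℝ} (hR : 0 < R) (Z : Finset ℂ) (hZ : ∀ z ∈ Z, F z = 0 ∧ ‖z‖ ≤ R) :
    ∑ z ∈ Z, Real.log (R / ‖z‖) + Real.log ‖F 0‖ ≤
      Real.circleAverage (fun z => Real.log ‖F z‖) 0 R := by
  have hA : AnalyticOnNhd ℂ F (closedBall 0 |R|) := fun z _ => hF.analyticAt z
  rw [AnalyticOnNhd.circleAverage_log_norm hR.ne' hA h0]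
  simp only [zero_sub, norm_neg, ← div_eq_mul_inv]
  gcongr
  have hdiv : ∀ z, MeromorphicOn.divisor F (closedBall 0 |R|) z ≠ 0 →
      0 ≤ Real.log (R / ‖z‖) := by
    intro z hz
    have hzR : ‖z‖ ≤ R := by
      simpa [abs_of_pos hR] using
        (MeromorphicOn.divisor F (closedBall 0 |R|)).supportWithinDomain hz
    rcases eq_or_ne z 0 with rfl | hz0
    · simp
    · exact Real.log_nonneg ((one_le_div (norm_pos_iff.2 hz0)).2 hzR)
  rw [← finsum_mem_coe_finset, finsum_mem_def]
  refine finsum_le_finsum' (Z.finite_toSet.subset Set.support_indicator_subset)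
    (((MeromorphicOn.divisor F (closedBall 0 |R|)).finiteSupport
      (isCompact_closedBall 0 |R|)).subset fun z hz => ?_) fun z => ?_
  · exact_mod_cast left_ne_zero_of_mul hz
  · by_cases hz : z ∈ (Z : Set ℂ)
    · have h1 := one_le_divisor_of_apply_eq_zero hF h0 (hZ z hz).1
        (show z ∈ closedBall 0 |R| by simpa [abs_of_pos hR] using (hZ z hz).2)
      rw [Set.indicator_of_mem hz]
      exact le_mul_of_one_le_left (hdiv z (by lia))
        (Int.cast_one (R := ℝ) ▸ Int.cast_mono h1)
    · rw [Set.indicator_of_notMem hz]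
      by_cases h : MeromorphicOn.divisor F (closedBall 0 |R|) z = 0
      · simp [h]
      · exact mul_nonneg (Int.cast_nonneg (MeromorphicOn.AnalyticOnNhd.divisor_nonneg hA z))
          (hdiv z h)

lemma integral_abs_sin : ∫ θ in 0..2 * Real.pi, |Real.sin θ| = 4 := by
  have hper : Function.Periodic (fun θ => |Real.sin θ|) Real.pi := fun θ => by
    simp [Real.sin_add_pi]
  have hcont : Continuous fun θ => |Real.sin θ| := by fun_prop
  have hhalf : ∫ θ in 0..Real.pi, |Real.sin θ| = 2 := by
    rw [intervalIntegral.integral_congr (g := Real.sin), integral_sin]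
    · norm_num
    · intro θ hθ
      rw [Set.uIcc_of_le Real.pi_pos.le] at hθ
      exact abs_of_nonneg (Real.sin_nonneg_of_mem_Icc hθ)
  have hshift : ∫ θ in Real.pi..2 * Real.pi, |Real.sin θ| = 2 := by
    simpa [two_mul, hhalf] using hper.intervalIntegral_add_eq Real.pi 0
  rw [← intervalIntegral.integral_add_adjacent_intervals (hcont.intervalIntegrable _ Real.pi)
    (hcont.intervalIntegrable _ _), hhalf, hshift]
  norm_num

lemma circleAverage_abs_im {R : ℝ} (hR : 0 ≤ R) :
    Real.circleAverage (fun z : ℂ => |z.im|) 0 R = 2 * R / Real.pi := by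
  have him : ∀ θ : ℝ, |(circleMap 0 R θ).im| = R * |Real.sin θ| := fun θ => by
    rw [circleMap_zero, Complex.im_ofReal_mul, Complex.exp_ofReal_mul_I_im, abs_mul,
      abs_of_nonneg hR]
  simp only [Real.circleAverage_def, him, intervalIntegral.integral_const_mul, integral_abs_sin,
    smul_eq_mul]
  field_simp
  ring

lemma circleAverage_log_norm_le_of_growth {F : ℂ → ℂ} (hF : Differentiable ℂ F) {C τ : ℝ} {M : ℕ}
    (hC : 1 ≤ C) (hτ : 0 ≤ τ)
    (hgrow : ∀ z, ‖F z‖ ≤ C * (1 + ‖z‖) ^ M * Real.exp (Real.pi * τ * |z.im|))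
    {R : ℝ} (hR : 0 ≤ R) :
    Real.circleAverage (fun z => Real.log ‖F z‖) 0 R ≤
      Real.log C + M * Real.log (1 + R) + 2 * τ * R := by
  have him : CircleIntegrable (fun z : ℂ => |z.im|) 0 R :=
    ContinuousOn.circleIntegrable hR (by fun_prop)
  have hsplit := Real.circleAverage_fun_add
    (circleIntegrable_const (Real.log C + M * Real.log (1 + R)) 0 R)
    (him.const_fun_smul (a := Real.pi * τ))
  rw [Real.circleAverage_const, Real.circleAverage_fun_smul, circleAverage_abs_im hR,
    smul_eq_mul, show Real.pi * τ * (2 * R / Real.pi) = 2 * τ * R by field_simp] at hsplit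
  rw [← hsplit]
  refine Real.circleAverage_mono
    (MeromorphicOn.circleIntegrable_log_norm fun z _ => (hF.analyticAt z).meromorphicAt)
    (ContinuousOn.circleIntegrable hR (by fun_prop)) fun z hz => ?_
  have hzR : ‖z‖ = R := by simpa [abs_of_nonneg hR] using hz
  by_cases hFz : F z = 0
  · rw [hFz, norm_zero, Real.log_zero]
    have := Real.log_nonneg hC
    have := Real.log_nonneg (show 1 ≤ 1 + R by linarith)
    positivity
  · calc Real.log ‖F z‖
        ≤ Real.log (C * (1 + R) ^ M * Real.exp (Real.pi * τ * |z.im|)) :=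
          Real.log_le_log (norm_pos_iff.2 hFz) (hzR ▸ hgrow z)
      _ = Real.log C + M * Real.log (1 + R) + (Real.pi * τ) • |z.im| := by
          rw [Real.log_mul (by positivity) (by positivity), Real.log_exp,
            Real.log_mul (by positivity) (by positivity), Real.log_pow, smul_eq_mul]

lemma sub_two_mul_log_le_sum_log_sub_log (K : ℕ) :
    (K : ℝ) - 2 * Real.log (K + 1) ≤
      ∑ k ∈ Finset.range K, (Real.log (K + 1) - Real.log (k + 2)) := by
  simp only [Finset.sum_sub_distrib, Finset.sum_const, Finset.card_range, nsmul_eq_mul]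
  induction K with
  | zero => simp
  | succ K ih =>
    have hlog : 1 ≤ ((K : ℝ) + 2) * (Real.log (K + 2) - Real.log (K + 1)) := by
      have h := Real.one_sub_inv_le_log_of_pos (show 0 < ((K : ℝ) + 2) / (K + 1) by positivity)
      rw [Real.log_div (by positivity) (by positivity)] at h
      calc (1 : ℝ) = (K + 2) * (1 - (((K : ℝ) + 2) / (K + 1))⁻¹) := by field_simp; ring
        _ ≤ _ := by gcongr
    rw [Finset.sum_range_succ]
    push_cast
    rw [show (K : ℝ) + 1 + 1 = K + 2 by ring]
    linarith

-- The annuli `||x| - b (k + 1)| ≤ r` are disjoint because `2 r < b`.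
lemma mul_sub_log_le_sum_log_div {b r : ℝ} (hr : 0 < r) (hb : 2 * r < b) {n K : ℕ}
    {T : ℕ → Finset ℝ} (hcard : ∀ k, (T k).card = n)
    (hT : ∀ k, ∀ x ∈ T k, x ≠ 0 ∧ |(|x| - b * (k + 1))| ≤ r) :
    n * ((K : ℝ) - 2 * Real.log (K + 1)) ≤
      ∑ x ∈ (Finset.range K).biUnion T, Real.log (b * (K + 1) / |x|) := by
  have hb0 : 0 < b := by linarith
  have hdisj : ((Finset.range K : Finset ℕ) : Set ℕ).PairwiseDisjoint T := by
    intro k _ l _ hkl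
    refine Finset.disjoint_left.2 fun x hxk hxl => ?_
    have hkl' : (1 : ℝ) ≤ |(k : ℝ) - l| := by
      exact_mod_cast Int.one_le_abs (sub_ne_zero.2 (Nat.cast_injective.ne hkl))
    have hle : |b * (k - l)| ≤ r + r := by
      calc |b * ((k : ℝ) - l)| = |(|x| - b * (l + 1)) - (|x| - b * (k + 1))| := by congr 1; ring
        _ ≤ r + r := (abs_sub _ _).trans (add_le_add (hT l x hxl).2 (hT k x hxk).2)
    rw [abs_mul, abs_of_pos hb0] at hle
    nlinarith
  calc n * ((K : ℝ) - 2 * Real.log (K + 1))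
      ≤ n * ∑ k ∈ Finset.range K, (Real.log (K + 1) - Real.log (k + 2)) := by
        gcongr; exact sub_two_mul_log_le_sum_log_sub_log K
    _ = ∑ k ∈ Finset.range K, ∑ _x ∈ T k, (Real.log (K + 1) - Real.log (k + 2)) := by
        simp only [Finset.sum_const, hcard, nsmul_eq_mul, Finset.mul_sum]
    _ ≤ ∑ k ∈ Finset.range K, ∑ x ∈ T k, Real.log (b * (K + 1) / |x|) := by
        refine Finset.sum_le_sum fun k _ => Finset.sum_le_sum fun x hx => ?_
        obtain ⟨hx0, hxr⟩ := hT k x hx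
        have hx0' := abs_pos.2 hx0
        rw [← Real.log_div (by positivity) (by positivity)]
        refine Real.log_le_log (by positivity) ?_
        rw [div_le_div_iff₀ (by positivity) hx0']
        nlinarith [(abs_le.1 hxr).2]
    _ = _ := (Finset.sum_biUnion hdisj).symm

-- Jensen's formula on the circle of radius `b (K + 1)`.
lemma jensen_bound_of_zeros_in_annuli {F : ℂ → ℂ} (hF : Differentiable ℂ F) (h0 : F 0 ≠ 0)
    {C τ b r : ℝ} {M n : ℕ} (hC : 1 ≤ C) (hτ : 0 ≤ τ) (hr : 0 < r) (hb : 2 * r < b)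
    (hgrow : ∀ z, ‖F z‖ ≤ C * (1 + ‖z‖) ^ M * Real.exp (Real.pi * τ * |z.im|))
    {T : ℕ → Finset ℝ} (hcard : ∀ k, (T k).card = n)
    (hT : ∀ k, ∀ x ∈ T k, F x = 0 ∧ |(|x| - b * (k + 1))| ≤ r) (K : ℕ) :
    n * ((K : ℝ) - 2 * Real.log (K + 1)) + Real.log ‖F 0‖ ≤
      Real.log C + M * Real.log (1 + b * (K + 1)) + 2 * τ * (b * (K + 1)) := by
  have hb0 : 0 < b := by linarith
  have hR : 0 < b * ((K : ℝ) + 1) := by positivity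
  refine le_trans (add_le_add_left ?_ _) <| (sum_log_add_log_norm_le_circleAverage hF h0 hR
    (((Finset.range K).biUnion T).map ⟨_, Complex.ofReal_injective⟩) ?_).trans
    (circleAverage_log_norm_le_of_growth hF hC hτ hgrow hR.le)
  · simpa using mul_sub_log_le_sum_log_div hr hb hcard fun k x hx =>
      ⟨fun h => h0 (by simpa [h] using (hT k x hx).1), (hT k x hx).2⟩
  · simp only [Finset.mem_map, Finset.mem_biUnion, Finset.mem_range, Function.Embedding.coeFn_mk]
    rintro _ ⟨x, ⟨k, hk, hx⟩, rfl⟩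
    obtain ⟨hFx, hxr⟩ := hT k x hx
    have hk' : (k : ℝ) + 1 ≤ K := by exact_mod_cast hk
    rw [Complex.norm_real, Real.norm_eq_abs]
    exact ⟨hFx, by nlinarith [(abs_le.1 hxr).2]⟩

lemma isLittleO_const_add_log_add_log {β : ℝ} (hβ : 0 < β) (c A B : ℝ) :
    (fun x : ℝ => c + A * Real.log x + B * Real.log (1 + β * x)) =o[atTop] fun x => x := by
  have hlin : (fun x : ℝ => 1 + β * x) =O[atTop] fun x => x :=
    (Asymptotics.isLittleO_const_id_atTop (1 : ℝ)).isBigO.add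
      ((Asymptotics.isBigO_refl _ _).const_mul_left β)
  have hlog : (fun x : ℝ => Real.log (1 + β * x)) =o[atTop] fun x => x :=
    (Real.isLittleO_log_id_atTop.comp_tendsto
      (tendsto_atTop_add_const_left _ 1 (tendsto_id.const_mul_atTop hβ))).trans_isBigO hlin
  exact ((Asymptotics.isLittleO_const_id_atTop c).add
    (Real.isLittleO_log_id_atTop.const_mul_left A)).add (hlog.const_mul_left B)

lemma le_of_forall_nat_mul_le_add_log {a b β c A B : ℝ} (hβ : 0 < β)
    (h : ∀ K : ℕ, a * (K + 1) ≤
      b * (K + 1) + (c + A * Real.log (K + 1) + B * Real.log (1 + β * (K + 1)))) :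
    a ≤ b := by
  have hlim := ((isLittleO_const_add_log_add_log hβ c A B).tendsto_div_nhds_zero.const_add b).comp
    (tendsto_atTop_add_const_right _ (1 : ℝ) tendsto_natCast_atTop_atTop)
  rw [add_zero] at hlim
  refine ge_of_tendsto' hlim fun K => ?_
  have hK : (0 : ℝ) < K + 1 := by positivity
  rw [Function.comp_apply, ← mul_div_cancel_right₀ b hK.ne', ← add_div, le_div_iff₀ hK]
  exact h K

-- The intervals `[b k - r, b k + r]` are disjoint, so that the real zeros have density at least
-- `m / b > τ`, too much for the exponential type `π τ`.
lemma apply_zero_eq_zero_of_dense_zeros {F : ℂ → ℂ} (hF : Differentiable ℂ F)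
    {C τ b r : ℝ} {M m : ℕ} (hτ : 0 ≤ τ) (hr : 0 < r) (hb : 2 * r < b) (hm : τ * b < m)
    (hgrow : ∀ z, ‖F z‖ ≤ C * (1 + ‖z‖) ^ M * Real.exp (Real.pi * τ * |z.im|))
    (hzeros : ∀ c : ℝ, ∃ T : Finset ℝ, T.card = m ∧ ∀ x ∈ T, F x = 0 ∧ |x - c| ≤ r) :
    F 0 = 0 := by
  by_contra h0
  have hb0 : 0 < b := by linarith
  choose T hcard hT using hzeros
  have hsplit : ∀ (k : ℕ), ∀ x ∈ T (b * (k + 1)) ∪ T (-(b * (k + 1))),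
      F x = 0 ∧ |(|x| - b * (k + 1))| ≤ r := by
    intro k x hx
    have hk : b ≤ b * (k + 1) := le_mul_of_one_le_right hb0.le (by simp)
    rcases Finset.mem_union.1 hx with hx | hx <;> obtain ⟨hFx, hxr⟩ := hT _ x hx <;>
      refine ⟨hFx, ?_⟩
    · rwa [abs_of_pos (show 0 < x by linarith [(abs_le.1 hxr).1])]
    · rwa [abs_of_neg (show x < 0 by linarith [(abs_le.1 hxr).2]), ← abs_neg, neg_sub', neg_neg]
  have hdisj : ∀ k : ℕ, Disjoint (T (b * (k + 1))) (T (-(b * (k + 1)))) := by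
    intro k
    have hk : b ≤ b * (k + 1) := le_mul_of_one_le_right hb0.le (by simp)
    refine Finset.disjoint_left.2 fun x hx hx' => ?_
    linarith [(abs_le.1 (hT _ x hx).2).1, (abs_le.1 (hT _ x hx').2).2]
  have hgrow' : ∀ z, ‖F z‖ ≤ max C 1 * (1 + ‖z‖) ^ M * Real.exp (Real.pi * τ * |z.im|) :=
    fun z => (hgrow z).trans (by gcongr; exact le_max_left C 1)
  have hbound := jensen_bound_of_zeros_in_annuli hF h0 (le_max_right C 1) hτ hr hb hgrow'
    (n := 2 * m) (fun k => by rw [Finset.card_union_of_disjoint (hdisj k), hcard, hcard, two_mul])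
    hsplit
  have hle : 2 * (m : ℝ) ≤ 2 * (τ * b) :=
    le_of_forall_nat_mul_le_add_log (c := 2 * m + Real.log (max C 1) - Real.log ‖F 0‖) (A := 4 * m)
      (B := M) hb0 fun K => by
        have := hbound K
        push_cast at this
        linarith
  linarith

end Jensen

section PlaneWave

variable {W : Type*} [NormedAddCommGroup W] [InnerProductSpace ℝ W]

/-- The plane wave `x ↦ e^{2πi⟨ξ, x⟩}` of frequency `ξ`. -/
def planeWave (ξ x : W) : ℂ := Complex.exp (2 * Real.pi * Complex.I * (⟪ξ, x⟫ : ℝ))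

lemma norm_planeWave (ξ x : W) : ‖planeWave ξ x‖ = 1 := by
  simp [planeWave, Complex.norm_exp]

lemma planeWave_zero_left (x : W) : planeWave 0 x = 1 := by simp [planeWave]

lemma planeWave_zero_right (ξ : W) : planeWave ξ 0 = 1 := by simp [planeWave]

lemma planeWave_add_left (ξ η x : W) :
    planeWave (ξ + η) x = planeWave ξ x * planeWave η x := by
  rw [planeWave, planeWave, planeWave, ← Complex.exp_add, inner_add_left]
  push_cast
  ring_nf

lemma planeWave_comm (ξ x : W) : planeWave ξ x = planeWave x ξ := by
  rw [planeWave, planeWave, real_inner_comm]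

lemma planeWave_add_right (ξ x y : W) :
    planeWave ξ (x + y) = planeWave ξ x * planeWave ξ y := by
  simp only [planeWave_comm ξ, planeWave_add_left]

lemma planeWave_smul_right (ξ x : W) (c : ℝ) : planeWave ξ (c • x) = planeWave (c • ξ) x := by
  simp [planeWave, inner_smul_left, inner_smul_right]

lemma contDiff_planeWave (ξ : W) : ContDiff ℝ (⊤ : ℕ∞) (planeWave ξ) :=
  Complex.contDiff_exp.comp <| contDiff_const.mul <|
    Complex.ofRealCLM.contDiff.comp <| contDiff_const.inner ℝ contDiff_id

/-- The function `ξ ↦ e^{2πiz(⟨u, ξ⟩ - a)}`: for complex `z` it replaces the plane wave of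
frequency `z • u`, recentred so that it stays small where `⟨u, ξ⟩` is close to `a`. -/
def complexWave (u : W) (a : ℝ) (z : ℂ) (ξ : W) : ℂ :=
  Complex.exp (2 * Real.pi * Complex.I * z * ((⟪u, ξ⟫ : ℝ) - a))

lemma complexWave_ofReal (u : W) (a t : ℝ) (ξ : W) :
    complexWave u a t ξ =
      Complex.exp (-(2 * Real.pi * Complex.I * t * a)) * planeWave (t • u) ξ := by
  rw [complexWave, planeWave, ← Complex.exp_add, real_inner_smul_left]
  push_cast
  ring_nf

lemma contDiff_complexWave (u : W) (a : ℝ) (z : ℂ) :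
    ContDiff ℝ (⊤ : ℕ∞) (complexWave u a z) :=
  Complex.contDiff_exp.comp <| contDiff_const.mul <|
    (Complex.ofRealCLM.contDiff.comp <| contDiff_const.inner ℝ contDiff_id).sub contDiff_const

lemma differentiable_complexWave (u : W) (a : ℝ) (ξ : W) :
    Differentiable ℂ fun z => complexWave u a z ξ := by
  unfold complexWave
  fun_prop

lemma norm_complexWave_le {u ξ : W} {a σ : ℝ} (h : |⟪u, ξ⟫ - a| ≤ σ / 2) (z : ℂ) :
    ‖complexWave u a z ξ‖ ≤ Real.exp (Real.pi * σ * |z.im|) := by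
  have hre : (2 * Real.pi * Complex.I * z * ((⟪u, ξ⟫ : ℝ) - a) : ℂ).re =
      2 * Real.pi * -(z.im * (⟪u, ξ⟫ - a)) := by
    simp only [Complex.mul_re, Complex.mul_im, Complex.sub_re, Complex.sub_im,
      Complex.ofReal_re, Complex.ofReal_im, Complex.I_re, Complex.I_im, Complex.re_ofNat,
      Complex.im_ofNat]
    ring
  rw [complexWave, Complex.norm_exp, hre]
  refine Real.exp_le_exp.2 ?_
  calc 2 * Real.pi * -(z.im * (⟪u, ξ⟫ - a)) ≤ 2 * Real.pi * (|z.im| * |⟪u, ξ⟫ - a|) := by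
        rw [← abs_mul]
        gcongr
        exact neg_le_abs _
    _ ≤ 2 * Real.pi * (|z.im| * (σ / 2)) := by gcongr
    _ = Real.pi * σ * |z.im| := by ring

lemma iteratedDeriv_cexp_affine (c d : ℂ) (n : ℕ) :
    iteratedDeriv n (fun t : ℝ => Complex.exp (c * (t - d))) =
      fun t : ℝ => c ^ n * Complex.exp (c * (t - d)) := by
  induction n with
  | zero => simp only [iteratedDeriv_zero, pow_zero, one_mul]
  | succ n ih =>
    ext t
    have hexp : HasDerivAt (fun t : ℝ => Complex.exp (c * (t - d)))
        (Complex.exp (c * (t - d)) * (c * 1)) t :=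
      (((Complex.ofRealCLM.hasDerivAt (x := t)).sub_const d).const_mul c).cexp
    rw [iteratedDeriv_succ, ih, (hexp.const_mul (c ^ n)).deriv]
    ring

lemma norm_iteratedFDeriv_complexWave_le (u : W) (a : ℝ) (z : ℂ) (n : ℕ) (ξ : W) :
    ‖iteratedFDeriv ℝ n (complexWave u a z) ξ‖ ≤
      (2 * Real.pi * ‖z‖ * ‖u‖) ^ n * ‖complexWave u a z ξ‖ := by
  set c : ℂ := 2 * Real.pi * Complex.I * z
  have hc : ‖c‖ = 2 * Real.pi * ‖z‖ := by simp [c, abs_of_pos Real.pi_pos]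
  have hcomp : complexWave u a z = (fun t : ℝ => Complex.exp (c * (t - a))) ∘ innerSL ℝ u := rfl
  have hsmooth : ContDiff ℝ n (fun t : ℝ => Complex.exp (c * (t - a))) :=
    Complex.contDiff_exp.comp (contDiff_const.mul (Complex.ofRealCLM.contDiff.sub contDiff_const))
  rw [hcomp, (innerSL ℝ u).iteratedFDeriv_comp_right hsmooth ξ le_rfl]
  refine (ContinuousMultilinearMap.norm_compContinuousLinearMap_le _ _).trans_eq ?_
  rw [norm_iteratedFDeriv_eq_norm_iteratedDeriv, iteratedDeriv_cexp_affine, norm_mul, norm_pow,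
    Finset.prod_const, Finset.card_univ, Fintype.card_fin, innerSL_apply_norm, hc, mul_pow,
    Function.comp_apply]
  ring

lemma norm_iteratedFDeriv_complexWave_le_of_abs_le {u ξ : W} {a σ : ℝ}
    (h : |⟪u, ξ⟫ - a| ≤ σ / 2) (z : ℂ) {j l : ℕ} (hj : j ≤ l) :
    ‖iteratedFDeriv ℝ j (complexWave u a z) ξ‖ ≤
      (1 + 2 * Real.pi * ‖u‖) ^ l * ((1 + ‖z‖) ^ l * Real.exp (Real.pi * σ * |z.im|)) := by
  refine (norm_iteratedFDeriv_complexWave_le u a z j ξ).trans ?_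
  rw [← mul_assoc, ← mul_pow]
  have hu : 0 ≤ 2 * Real.pi * ‖u‖ := by positivity
  refine mul_le_mul ?_ (norm_complexWave_le h z) (norm_nonneg _) (by positivity)
  calc (2 * Real.pi * ‖z‖ * ‖u‖) ^ j ≤ ((1 + 2 * Real.pi * ‖u‖) * (1 + ‖z‖)) ^ j :=
        pow_le_pow_left₀ (by positivity) (by nlinarith [norm_nonneg z]) _
    _ ≤ ((1 + 2 * Real.pi * ‖u‖) * (1 + ‖z‖)) ^ l :=
        pow_le_pow_right₀ (by nlinarith [norm_nonneg z, mul_nonneg hu (norm_nonneg z)]) hj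

end PlaneWave

section Schwartz

open scoped SchwartzMap

lemma norm_pow_mul_iteratedFDeriv_mul_le {W : Type*} [NormedAddCommGroup W] [NormedSpace ℝ W]
    (ψ : 𝓢(W, ℂ)) {E : W → ℂ} (hE : ContDiff ℝ (⊤ : ℕ∞) E) {l : ℕ} {G : ℝ} (hG : 0 ≤ G)
    (hEG : ∀ j ≤ l, ∀ ξ ∈ tsupport ψ, ‖iteratedFDeriv ℝ j E ξ‖ ≤ G) (k : ℕ) (ξ : W) :
    ‖ξ‖ ^ k * ‖iteratedFDeriv ℝ l (fun ξ => ψ ξ * E ξ) ξ‖ ≤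
      (∑ i ∈ Finset.range (l + 1), l.choose i * SchwartzMap.seminorm ℂ k i ψ) * G := by
  by_cases hξ : ξ ∈ tsupport ψ
  · calc ‖ξ‖ ^ k * ‖iteratedFDeriv ℝ l (fun ξ => ψ ξ * E ξ) ξ‖
        ≤ ‖ξ‖ ^ k * ∑ i ∈ Finset.range (l + 1),
            l.choose i * ‖iteratedFDeriv ℝ i ψ ξ‖ * ‖iteratedFDeriv ℝ (l - i) E ξ‖ := by
          gcongr
          exact norm_iteratedFDeriv_mul_le ψ.smooth' hE ξ (mod_cast le_top)
      _ = ∑ i ∈ Finset.range (l + 1), l.choose i * (‖ξ‖ ^ k * ‖iteratedFDeriv ℝ i ψ ξ‖) *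
            ‖iteratedFDeriv ℝ (l - i) E ξ‖ := by
          rw [Finset.mul_sum]
          exact Finset.sum_congr rfl fun i _ => by ring
      _ ≤ ∑ i ∈ Finset.range (l + 1), l.choose i * SchwartzMap.seminorm ℂ k i ψ * G := by
          gcongr with i
          · exact SchwartzMap.le_seminorm ℂ k i ψ ξ
          · exact hEG _ (Nat.sub_le _ _) ξ hξ
      _ = _ := (Finset.sum_mul _ _ _).symm
  · have hzero : iteratedFDeriv ℝ l (fun ξ => ψ ξ * E ξ) ξ = 0 :=
      Function.notMem_support.1 fun h =>
        hξ (tsupport_mul_subset_left (support_iteratedFDeriv_subset l h))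
    rw [hzero, norm_zero, mul_zero]
    positivity

lemma exists_one_add_norm_pow_mul_fourier_le (n : ℕ) :
    ∃ (s : Finset (ℕ × ℕ)) (C : ℝ), 0 ≤ C ∧ ∀ (φ : 𝓢(V, ℂ)) (y : V),
      (1 + ‖y‖) ^ n * ‖𝓕 (φ : V → ℂ) y‖ ≤ C * ∑ m ∈ s, SchwartzMap.seminorm ℂ m.1 m.2 φ := by
  let p : Seminorm ℂ 𝓢(V, ℂ) := (Finset.Iic (n, 0)).sup (schwartzSeminormFamily ℂ V ℂ)
  have hp : Continuous p := Seminorm.continuous_finsetSup fun i _ =>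
    (schwartz_withSeminorms ℂ V ℂ).continuous_seminorm i
  let 𝓕L := FourierTransform.fourierCLM ℂ 𝓢(V, ℂ)
  obtain ⟨s, C, -, hC⟩ := Seminorm.bound_of_continuous (schwartz_withSeminorms ℂ V ℂ)
    (p.comp 𝓕L.toLinearMap) (hp.comp 𝓕L.continuous)
  refine ⟨s, 2 ^ n * C, by positivity, fun φ y => ?_⟩
  calc (1 + ‖y‖) ^ n * ‖𝓕 (φ : V → ℂ) y‖ ≤ 2 ^ n * p (𝓕 φ) := by
        rw [← SchwartzMap.fourier_coe, ← norm_iteratedFDeriv_zero (𝕜 := ℝ)]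
        exact SchwartzMap.one_add_le_sup_seminorm_apply (m := (n, 0)) le_rfl le_rfl (𝓕 φ) y
    _ ≤ 2 ^ n * (C * ∑ m ∈ s, SchwartzMap.seminorm ℂ m.1 m.2 φ) := by
        gcongr
        refine (hC φ).trans (mul_le_mul_of_nonneg_left ?_ C.2)
        simpa [schwartzSeminormFamily] using
          Seminorm.finset_sup_le_sum (schwartzSeminormFamily ℂ V ℂ) s φ
    _ = 2 ^ n * C * ∑ m ∈ s, SchwartzMap.seminorm ℂ m.1 m.2 φ := by ring

lemma integrable_inv_one_add_norm_pow :
    Integrable fun y : V => ((1 + ‖y‖) ^ (Module.finrank ℝ V + 1))⁻¹ := by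
  refine (integrable_one_add_norm (E := V) (r := (Module.finrank ℝ V + 1 : ℕ)) ?_).congr ?_
  · exact_mod_cast Nat.lt_succ_self _
  · refine Eventually.of_forall fun y => ?_
    simp only [Real.rpow_neg (by positivity : 0 ≤ 1 + ‖y‖), Real.rpow_natCast]

lemma exists_norm_sub_le_of_norm_le_one {W : Type*} [NormedAddCommGroup W] [NormedSpace ℝ W]
    (g : 𝓢(W, ℂ)) (n : ℕ) : ∃ C, 0 ≤ C ∧ ∀ w h : W, ‖h‖ ≤ 1 →
      ‖g (w + h) - g w‖ ≤ C * ((1 + ‖w‖) ^ n)⁻¹ * ‖h‖ := by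
  let A := 2 ^ n * (Finset.Iic (n, 1)).sup (fun m => SchwartzMap.seminorm ℝ m.1 m.2) g
  have hA0 : 0 ≤ A := by positivity
  have hA : ∀ v, ‖fderiv ℝ g v‖ ≤ A * ((1 + ‖v‖) ^ n)⁻¹ := fun v => by
    rw [← div_eq_mul_inv, le_div_iff₀' (by positivity), ← norm_iteratedFDeriv_one]
    exact SchwartzMap.one_add_le_sup_seminorm_apply (𝕜 := ℝ) (m := (n, 1)) le_rfl le_rfl g v
  refine ⟨A * 2 ^ n, by positivity, fun w h hh => ?_⟩
  have hbound : ∀ v ∈ closedBall w 1, ‖fderiv ℝ g v‖ ≤ A * 2 ^ n * ((1 + ‖w‖) ^ n)⁻¹ := by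
    intro v hv
    have hvw : 1 + ‖w‖ ≤ 2 * (1 + ‖v‖) := by
      linarith [norm_le_norm_add_norm_sub v w, norm_nonneg v, mem_closedBall_iff_norm.1 hv]
    refine (hA v).trans ?_
    rw [mul_assoc A (2 ^ n)]
    refine mul_le_mul_of_nonneg_left ?_ hA0
    rw [← div_eq_mul_inv, inv_le_comm₀ (by positivity) (by positivity), inv_div,
      div_le_iff₀' (by positivity), ← mul_pow]
    gcongr
  simpa using (convex_closedBall w 1).norm_image_sub_le_of_norm_fderiv_le
    (fun v _ => g.differentiableAt) hbound (mem_closedBall_self zero_le_one)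
    (show w + h ∈ closedBall w 1 by simpa [mem_closedBall_iff_norm] using hh)

lemma exists_integral_norm_sub_translate_le (g : 𝓢(V, ℂ)) :
    ∃ L, 0 ≤ L ∧ ∀ h : V, ∫ w, ‖g (w + h) - g w‖ ≤ L * ‖h‖ := by
  obtain ⟨C, hC0, hC⟩ := exists_norm_sub_le_of_norm_le_one g (Module.finrank ℝ V + 1)
  let I := ∫ w : V, ((1 + ‖w‖) ^ (Module.finrank ℝ V + 1))⁻¹
  have hI : 0 ≤ C * I := mul_nonneg hC0 (integral_nonneg fun w => by positivity)
  have hg : 0 ≤ 2 * ∫ w, ‖g w‖ := by positivity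
  refine ⟨C * I + 2 * ∫ w, ‖g w‖, add_nonneg hI hg, fun h => ?_⟩
  rcases le_or_gt ‖h‖ 1 with hh | hh
  · calc ∫ w, ‖g (w + h) - g w‖
        ≤ ∫ w, C * ((1 + ‖w‖) ^ (Module.finrank ℝ V + 1))⁻¹ * ‖h‖ :=
          integral_mono_of_nonneg (Eventually.of_forall fun w => norm_nonneg _)
            ((integrable_inv_one_add_norm_pow.const_mul C).mul_const _)
            (Eventually.of_forall fun w => hC w h hh)
      _ = C * I * ‖h‖ := by rw [integral_mul_const, integral_const_mul]
      _ ≤ (C * I + 2 * ∫ w, ‖g w‖) * ‖h‖ := by gcongr; linarith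
  · calc ∫ w, ‖g (w + h) - g w‖ ≤ ∫ w, (‖g (w + h)‖ + ‖g w‖) :=
          integral_mono_of_nonneg (Eventually.of_forall fun w => norm_nonneg _)
            ((g.integrable.comp_add_right h).norm.add g.integrable.norm)
            (Eventually.of_forall fun w => norm_sub_le _ _)
      _ = 2 * (∫ w, ‖g w‖) * 1 := by
          rw [integral_add (g.integrable.comp_add_right h).norm g.integrable.norm,
            integral_add_right_eq_self fun w => ‖g w‖]
          ring
      _ ≤ (C * I + 2 * ∫ w, ‖g w‖) * ‖h‖ := by gcongr; linarith

end Schwartz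

section ReproducingFormula

lemma fourier_mul_planeWave (ψ : V → ℂ) (x y : V) :
    𝓕 (fun ξ => ψ ξ * planeWave x ξ) y = 𝓕 ψ (y - x) := by
  rw [Real.fourier_eq', Real.fourier_eq']
  refine integral_congr_ae (Eventually.of_forall fun ξ => ?_)
  simp only [smul_eq_mul, planeWave]
  rw [mul_comm (ψ ξ), ← mul_assoc, ← Complex.exp_add, inner_sub_right, real_inner_comm x ξ]
  congr 2
  push_cast
  ring

lemma fourier_sub {ψ₁ ψ₂ : V → ℂ} (h₁ : Integrable ψ₁) (h₂ : Integrable ψ₂) (y : V) :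
    𝓕 (fun ξ => ψ₁ ξ - ψ₂ ξ) y = 𝓕 ψ₁ y - 𝓕 ψ₂ y := by
  rw [Real.fourier_eq, Real.fourier_eq, Real.fourier_eq,
    ← integral_sub ((Real.fourierIntegral_convergent_iff y).2 h₁)
      ((Real.fourierIntegral_convergent_iff y).2 h₂)]
  simp only [smul_sub]

lemma fourier_comp_inv_smul (χ : V → ℂ) {r : ℝ} (hr : 0 < r) (y : V) :
    𝓕 (fun ξ => χ (r⁻¹ • ξ)) y = (r ^ Module.finrank ℝ V : ℝ) • 𝓕 χ (r • y) := by
  rw [Real.fourier_eq', Real.fourier_eq', ← Measure.integral_comp_inv_smul_of_nonneg _ _ hr.le]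
  refine integral_congr_ae (Eventually.of_forall fun ξ => ?_)
  simp only [real_inner_smul_left, real_inner_smul_right, mul_inv_cancel_left₀ hr.ne']

lemma integral_mul_fourier_comp_inv_smul (f χ : V → ℂ) {r : ℝ} (hr : 0 < r) (x : V) :
    ∫ y, f y * 𝓕 (fun ξ => χ (r⁻¹ • ξ)) (y - x) = ∫ y, f (x + r⁻¹ • y) * 𝓕 χ y := by
  calc ∫ y, f y * 𝓕 (fun ξ => χ (r⁻¹ • ξ)) (y - x)
      = ∫ y, f (x + y) * 𝓕 (fun ξ => χ (r⁻¹ • ξ)) y := by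
        rw [← integral_add_right_eq_self _ x]
        simp only [add_sub_cancel_right, add_comm x]
    _ = (r ^ Module.finrank ℝ V : ℝ) • ∫ y, f (x + r⁻¹ • (r • y)) * 𝓕 χ (r • y) := by
        rw [← integral_smul]
        refine integral_congr_ae (Eventually.of_forall fun y => ?_)
        simp only [fourier_comp_inv_smul χ hr, inv_smul_smul₀ hr.ne', mul_smul_comm]
    _ = ∫ y, f (x + r⁻¹ • y) * 𝓕 χ y := by
        rw [Measure.integral_comp_smul_of_nonneg volume (fun y => f (x + r⁻¹ • y) * 𝓕 χ y) r
          (hR := hr.le), smul_inv_smul₀ (by positivity)]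

lemma integrable_fourier_of_contDiff {ψ : V → ℂ} (hψ : ContDiff ℝ (⊤ : ℕ∞) ψ)
    (hψc : HasCompactSupport ψ) : Integrable (𝓕 ψ) := by
  simpa only [SchwartzMap.fourier_coe] using
    (𝓕 (hψc.toSchwartzMap hψ)).integrable (μ := (volume : Measure V))

lemma integral_planeWave_mul_fourier {ψ : V → ℂ} (hψ : ContDiff ℝ (⊤ : ℕ∞) ψ)
    (hψc : HasCompactSupport ψ) (ξ : V) : ∫ x, planeWave ξ x * 𝓕 ψ x = ψ ξ := by
  rw [← congrFun (Continuous.fourierInv_fourier_eq hψ.continuous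
    (hψ.continuous.integrable_of_hasCompactSupport hψc)
    (integrable_fourier_of_contDiff hψ hψc)) ξ, Real.fourierInv_eq']
  refine integral_congr_ae (Eventually.of_forall fun x => ?_)
  simp only [smul_eq_mul, planeWave, real_inner_comm]
  push_cast
  ring_nf

lemma integrable_mul_fourier {f ψ : V → ℂ} {B : ℝ} (hf : Continuous f) (hB : ∀ x, ‖f x‖ ≤ B)
    (hψ : ContDiff ℝ (⊤ : ℕ∞) ψ) (hψc : HasCompactSupport ψ) (x : V) :
    Integrable fun y => f y * 𝓕 ψ (y - x) :=
  ((integrable_fourier_of_contDiff hψ hψc).comp_sub_right x).bdd_mul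
    hf.aestronglyMeasurable (Eventually.of_forall hB)

lemma exists_cutoff {W : Type*} [NormedAddCommGroup W] [NormedSpace ℝ W] [FiniteDimensional ℝ W]
    {K U : Set W} (hK : IsCompact K) (hU : IsOpen U) (hKU : K ⊆ U) :
    ∃ ψ : W → ℂ, ContDiff ℝ (⊤ : ℕ∞) ψ ∧ HasCompactSupport ψ ∧ tsupport ψ ⊆ U ∧
      ∀ ξ ∈ K, ∀ᶠ η in nhds ξ, ψ η = 1 := by
  obtain ⟨L, hL, hKL, hLU⟩ := exists_compact_between hK hU hKU
  obtain ⟨f, hf1, hf0, -⟩ := exists_contMDiffMap_one_nhds_of_subset_interior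
    (modelWithCornersSelf ℝ W) (n := (⊤ : ℕ∞)) hK.isClosed hKL
  have hsupp : Function.support (fun ξ => (f ξ : ℂ)) ⊆ L := fun ξ hξ => by
    by_contra hξL
    exact hξ (by simp [hf0 ξ hξL])
  refine ⟨fun ξ => (f ξ : ℂ), Complex.ofRealCLM.contDiff.comp f.contMDiff.contDiff,
    HasCompactSupport.of_support_subset_isCompact hL hsupp,
    (closure_minimal hsupp hL.isClosed).trans hLU, fun ξ hξ => ?_⟩
  filter_upwards [mem_nhdsSet_iff_forall.1 hf1 ξ hξ] with η hη
  exact mod_cast hη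

lemma MemBernstein.integral_mul_fourier_congr {Ω : Set V} {f : V → ℂ} (hf : MemBernstein Ω f)
    {ψ₁ ψ₂ : V → ℂ} (h₁ : ContDiff ℝ (⊤ : ℕ∞) ψ₁) (hc₁ : HasCompactSupport ψ₁)
    (h₂ : ContDiff ℝ (⊤ : ℕ∞) ψ₂) (hc₂ : HasCompactSupport ψ₂)
    (h : ∀ ξ ∈ Ω, ψ₁ =ᶠ[nhds ξ] ψ₂) (x : V) :
    ∫ y, f y * 𝓕 ψ₁ (y - x) = ∫ y, f y * 𝓕 ψ₂ (y - x) := by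
  obtain ⟨hcont, ⟨B, hB⟩, hvanish⟩ := hf
  have hdisj : tsupport (fun ξ => (ψ₁ ξ - ψ₂ ξ) * planeWave x ξ) ∩ Ω = ∅ := by
    rw [Set.eq_empty_iff_forall_notMem]
    rintro ξ ⟨hξ, hξΩ⟩
    refine notMem_tsupport_iff_eventuallyEq.2 ?_ hξ
    filter_upwards [h ξ hξΩ] with η hη
    rw [hη, sub_self, zero_mul, Pi.zero_apply]
  have hzero := hvanish _ ((h₁.sub h₂).mul (contDiff_planeWave x)) (hc₁.sub hc₂).mul_right hdisj
  simp only [fourier_mul_planeWave (fun ξ => ψ₁ ξ - ψ₂ ξ),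
    fourier_sub (h₁.continuous.integrable_of_hasCompactSupport hc₁)
      (h₂.continuous.integrable_of_hasCompactSupport hc₂), mul_sub] at hzero
  rwa [integral_sub (integrable_mul_fourier hcont hB h₁ hc₁ x)
    (integrable_mul_fourier hcont hB h₂ hc₂ x), sub_eq_zero] at hzero

lemma tendsto_integral_comp_inv_smul_mul {f g : V → ℂ} {B : ℝ} (hf : Continuous f)
    (hB : ∀ x, ‖f x‖ ≤ B) (hg : Integrable g) (x : V) :
    Tendsto (fun r : ℝ => ∫ y, f (x + r⁻¹ • y) * g y) atTop (nhds (f x * ∫ y, g y)) := by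
  rw [← integral_const_mul]
  refine tendsto_integral_filter_of_dominated_convergence (fun y => B * ‖g y‖)
    (Eventually.of_forall fun r => ?_)
    (Eventually.of_forall fun r => Eventually.of_forall fun y => ?_)
    (hg.norm.const_mul B) (Eventually.of_forall fun y => ?_)
  · exact (hf.comp (by fun_prop)).aestronglyMeasurable.mul hg.aestronglyMeasurable
  · rw [norm_mul]
    gcongr
    exact hB _
  · refine ((hf.tendsto x).comp ?_).mul_const _
    simpa using ((tendsto_inv_atTop_zero (𝕜 := ℝ)).smul_const y).const_add x

-- A second cutoff, dilated to infinity, has Fourier transform concentrating at the origin.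
lemma MemBernstein.eq_integral {Ω : Set V} {f : V → ℂ} (hf : MemBernstein Ω f)
    (hΩ : IsCompact Ω) {ψ : V → ℂ} (hψ : ContDiff ℝ (⊤ : ℕ∞) ψ) (hψc : HasCompactSupport ψ)
    (hψΩ : ∀ ξ ∈ Ω, ∀ᶠ η in nhds ξ, ψ η = 1) (x : V) :
    f x = ∫ y, f y * 𝓕 ψ (y - x) := by
  obtain ⟨χ, hχ, hχc, -, hχ1⟩ := exists_cutoff (isCompact_singleton (x := (0 : V))) isOpen_univ
    (Set.subset_univ _)
  obtain ⟨ε, hε, hεχ⟩ := Metric.eventually_nhds_iff_ball.1 (hχ1 0 rfl)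
  obtain ⟨R, hR⟩ := hΩ.isBounded.subset_ball (0 : V)
  obtain ⟨B, hB⟩ := hf.2.1
  have hdilate : ∀ᶠ r : ℝ in atTop,
      ∫ y, f y * 𝓕 ψ (y - x) = ∫ y, f (x + r⁻¹ • y) * 𝓕 χ y := by
    filter_upwards [eventually_gt_atTop 0, eventually_ge_atTop (R / ε)] with r hr hRr
    rw [← integral_mul_fourier_comp_inv_smul f χ hr]
    refine hf.integral_mul_fourier_congr hψ hψc (ψ₂ := fun ξ => χ (r⁻¹ • ξ))
      (hχ.comp (contDiff_const_smul r⁻¹)) (hχc.comp_smul (inv_ne_zero hr.ne')) (fun ξ hξ => ?_) x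
    filter_upwards [hψΩ ξ hξ, isOpen_ball.mem_nhds (hR hξ)] with η hη hηR
    rw [hη, hεχ]
    rw [mem_ball_zero_iff, norm_smul, norm_inv, Real.norm_of_nonneg hr.le, inv_mul_lt_iff₀ hr]
    exact (mem_ball_zero_iff.1 hηR).trans_le ((div_le_iff₀ hε).1 hRr)
  have hone : ∫ y, 𝓕 χ y = 1 := by
    simpa [planeWave_zero_left, (hχ1 0 rfl).self_of_nhds] using
      integral_planeWave_mul_fourier hχ hχc 0
  have hlim := tendsto_integral_comp_inv_smul_mul hf.1 hB (integrable_fourier_of_contDiff hχ hχc) x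
  rw [hone, mul_one] at hlim
  exact tendsto_nhds_unique hlim (tendsto_const_nhds.congr' hdilate)

-- Bernstein's inequality, with an unspecified constant.
lemma exists_lipschitz_memBernstein {Ω : Set V} (hΩ : IsCompact Ω) :
    ∃ L : ℝ, 0 ≤ L ∧ ∀ f, MemBernstein Ω f → ∀ B, (∀ x, ‖f x‖ ≤ B) → ∀ x y,
      ‖f x - f y‖ ≤ L * B * ‖x - y‖ := by
  obtain ⟨ψ, hψ, hψc, -, hψΩ⟩ := exists_cutoff hΩ isOpen_univ (Set.subset_univ _)
  obtain ⟨L, hL0, hL⟩ := exists_integral_norm_sub_translate_le (𝓕 (hψc.toSchwartzMap hψ))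
  simp only [SchwartzMap.fourier_coe] at hL
  refine ⟨L, hL0, fun f hf B hB x y => ?_⟩
  have hint := integrable_fourier_of_contDiff hψ hψc
  calc ‖f x - f y‖ = ‖∫ w, f w * (𝓕 ψ (w - x) - 𝓕 ψ (w - y))‖ := by
        simp only [mul_sub]
        rw [integral_sub (integrable_mul_fourier hf.1 hB hψ hψc x)
          (integrable_mul_fourier hf.1 hB hψ hψc y), ← hf.eq_integral hΩ hψ hψc hψΩ,
          ← hf.eq_integral hΩ hψ hψc hψΩ]
    _ ≤ ∫ w, B * ‖𝓕 ψ (w - x) - 𝓕 ψ (w - y)‖ := by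
        refine norm_integral_le_of_norm_le
          (((hint.comp_sub_right x).sub (hint.comp_sub_right y)).norm.const_mul B)
          (Eventually.of_forall fun w => ?_)
        rw [norm_mul]
        gcongr
        exact hB w
    _ = B * ∫ w, ‖𝓕 ψ (w + (y - x)) - 𝓕 ψ w‖ := by
        rw [integral_const_mul, ← integral_add_right_eq_self _ y]
        simp only [add_sub_cancel_right, add_sub_assoc]
    _ ≤ B * (L * ‖y - x‖) := by
        gcongr
        · exact (norm_nonneg _).trans (hB 0)
        · exact hL _
    _ = L * B * ‖x - y‖ := by rw [norm_sub_rev]; ring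

end ReproducingFormula

section EntireExtension

lemma aestronglyMeasurable_deriv_of_differentiable {α : Type*} [MeasurableSpace α]
    {μ : Measure α} {K : ℂ → α → ℂ} (hdiff : ∀ a, Differentiable ℂ fun z => K z a)
    (hmeas : ∀ z, AEStronglyMeasurable (K z) μ) (z₀ : ℂ) :
    AEStronglyMeasurable (fun a => deriv (fun z => K z a) z₀) μ := by
  have hε : Tendsto (fun n : ℕ => (1 / ((n : ℂ) + 1))) atTop (nhdsWithin 0 {0}ᶜ) :=
    tendsto_nhdsWithin_iff.2 ⟨tendsto_one_div_add_atTop_nhds_zero_nat,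
      Eventually.of_forall fun n => one_div_ne_zero (Nat.cast_add_one_ne_zero n)⟩
  refine aestronglyMeasurable_of_tendsto_ae atTop
    (fun n : ℕ => ((hmeas (z₀ + 1 / ((n : ℂ) + 1))).sub (hmeas z₀)).const_smul
      (1 / ((n : ℂ) + 1))⁻¹) (Eventually.of_forall fun a => ?_)
  exact (hdiff a z₀).hasDerivAt.tendsto_slope_zero.comp hε

-- Cauchy's estimate turns a locally uniform domination of `K` into one of its derivative.
lemma differentiable_integral_of_dominated {α : Type*} [MeasurableSpace α] {μ : Measure α}
    {K : ℂ → α → ℂ} {b : ℝ → α → ℝ} (hdiff : ∀ a, Differentiable ℂ fun z => K z a)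
    (hmeas : ∀ z, AEStronglyMeasurable (K z) μ) (hint : ∀ R, Integrable (b R) μ)
    (hb : ∀ R z a, ‖z‖ ≤ R → ‖K z a‖ ≤ b R a) :
    Differentiable ℂ fun z => ∫ a, K z a ∂μ := by
  intro z₀
  have hderiv : ∀ a, ∀ z ∈ ball z₀ 1, ‖deriv (fun z => K z a) z‖ ≤ b (‖z₀‖ + 2) a := by
    intro a z hz
    have hsphere : ∀ w ∈ sphere z 1, ‖K w a‖ ≤ b (‖z₀‖ + 2) a := fun w hw => by
      refine hb _ _ _ ?_
      linarith [norm_le_norm_add_norm_sub' w z, norm_le_norm_add_norm_sub' z z₀,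
        mem_sphere_iff_norm.1 hw, mem_ball_iff_norm.1 hz]
    simpa using Complex.norm_deriv_le_of_forall_mem_sphere_norm_le one_pos
      (hdiff a).diffContOnCl hsphere
  exact (hasDerivAt_integral_of_dominated_loc_of_deriv_le (ball_mem_nhds z₀ one_pos)
    (Eventually.of_forall hmeas)
    ((hint ‖z₀‖).mono' (hmeas z₀) (Eventually.of_forall fun a => hb _ _ a le_rfl))
    (aestronglyMeasurable_deriv_of_differentiable hdiff hmeas z₀) (Eventually.of_forall hderiv)
    (hint _) (Eventually.of_forall fun a z _ => (hdiff a z).hasDerivAt)).2.differentiableAt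

lemma exists_norm_fourier_mul_complexWave_le {ψ : V → ℂ} (hψ : ContDiff ℝ (⊤ : ℕ∞) ψ)
    (hψc : HasCompactSupport ψ) {u : V} {a σ : ℝ}
    (hσ : ∀ ξ ∈ tsupport ψ, |⟪u, ξ⟫ - a| ≤ σ / 2) (n : ℕ) :
    ∃ (C : ℝ) (M : ℕ), 0 ≤ C ∧ ∀ z y, ‖𝓕 (fun ξ => ψ ξ * complexWave u a z ξ) y‖ ≤
      C * ((1 + ‖z‖) ^ M * Real.exp (Real.pi * σ * |z.im|)) * ((1 + ‖y‖) ^ n)⁻¹ := by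
  obtain ⟨s, C, hC0, hC⟩ := exists_one_add_norm_pow_mul_fourier_le (V := V) n
  let φ : ℂ → SchwartzMap V ℂ := fun z =>
    (hψc.mul_right (f' := complexWave u a z)).toSchwartzMap (hψ.mul (contDiff_complexWave u a z))
  let A : ℕ × ℕ → ℝ := fun m => (∑ i ∈ Finset.range (m.2 + 1), m.2.choose i *
    SchwartzMap.seminorm ℂ m.1 i (hψc.toSchwartzMap hψ)) * (1 + 2 * Real.pi * ‖u‖) ^ m.2
  have hA0 : ∀ m, 0 ≤ A m := fun m => by positivity
  let M := s.sup Prod.snd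
  have hφ : ∀ z, ∀ m ∈ s, SchwartzMap.seminorm ℂ m.1 m.2 (φ z) ≤
      A m * ((1 + ‖z‖) ^ M * Real.exp (Real.pi * σ * |z.im|)) := by
    intro z m hm
    refine SchwartzMap.seminorm_le_bound ℂ _ _ _ (mul_nonneg (hA0 m) (by positivity)) fun ξ => ?_
    refine (norm_pow_mul_iteratedFDeriv_mul_le (hψc.toSchwartzMap hψ)
      (contDiff_complexWave u a z) (by positivity) (fun j hj ξ hξ =>
        norm_iteratedFDeriv_complexWave_le_of_abs_le (hσ ξ hξ) z hj) m.1 ξ).trans ?_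
    rw [← mul_assoc]
    refine mul_le_mul_of_nonneg_left ?_ (hA0 m)
    gcongr
    · linarith [norm_nonneg z]
    · exact Finset.le_sup (f := Prod.snd) hm
  refine ⟨C * ∑ m ∈ s, A m, M, mul_nonneg hC0 (Finset.sum_nonneg fun m _ => hA0 m),
    fun z y => ?_⟩
  rw [← div_eq_mul_inv, le_div_iff₀' (by positivity), mul_assoc, Finset.sum_mul]
  exact (hC (φ z) y).trans (mul_le_mul_of_nonneg_left (Finset.sum_le_sum (hφ z)) hC0)

lemma differentiable_fourier_mul_complexWave {ψ : V → ℂ} (hψ : Continuous ψ)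
    (hψc : HasCompactSupport ψ) {u : V} {a σ : ℝ}
    (hσ : ∀ ξ ∈ tsupport ψ, |⟪u, ξ⟫ - a| ≤ σ / 2) (w : V) :
    Differentiable ℂ fun z => 𝓕 (fun ξ => ψ ξ * complexWave u a z ξ) w := by
  simp only [Real.fourier_eq]
  refine differentiable_integral_of_dominated
    (b := fun R ξ => ‖ψ ξ‖ * Real.exp (Real.pi * |σ| * R)) (fun ξ => ?_) (fun z => ?_)
    (fun R => (hψ.integrable_of_hasCompactSupport hψc).norm.mul_const _) (fun R z ξ hz => ?_)
  · exact ((differentiable_complexWave u a ξ).const_mul _).const_smul (𝐞 (-⟪ξ, w⟫) : ℂ)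
  · exact ((Real.fourierIntegral_convergent_iff w).2
      ((hψ.mul (contDiff_complexWave u a z).continuous).integrable_of_hasCompactSupport
        hψc.mul_right)).aestronglyMeasurable
  · rw [Circle.norm_smul, norm_mul]
    by_cases hξ : ψ ξ = 0
    · simp only [hξ, norm_zero, zero_mul, le_refl]
    · gcongr
      refine (norm_complexWave_le (hσ ξ (subset_tsupport _ hξ)) z).trans ?_
      gcongr
      · exact le_abs_self σ
      · exact (Complex.abs_im_le_norm z).trans hz

/-- The candidate for the entire extension of `t ↦ e^{-2πita} f(x + tu)`, where `f` is reproduced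
by convolution with the Fourier transform of `ψ`. -/
def lineExtension (f ψ : V → ℂ) (u x : V) (a : ℝ) (z : ℂ) : ℂ :=
  ∫ y, f y * 𝓕 (fun ξ => ψ ξ * complexWave u a z ξ) (y - x)

lemma lineExtension_ofReal (f ψ : V → ℂ) (u x : V) (a t : ℝ) :
    lineExtension f ψ u x a t =
      Complex.exp (-(2 * Real.pi * Complex.I * t * a)) * ∫ y, f y * 𝓕 ψ (y - (x + t • u)) := by
  have hwave : ∀ y, 𝓕 (fun ξ => ψ ξ * complexWave u a t ξ) (y - x) =
      Complex.exp (-(2 * Real.pi * Complex.I * t * a)) * 𝓕 ψ (y - (x + t • u)) := by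
    intro y
    rw [← sub_sub, ← fourier_mul_planeWave ψ (t • u), Real.fourier_eq, Real.fourier_eq,
      ← integral_const_mul]
    refine integral_congr_ae (Eventually.of_forall fun ξ => ?_)
    simp only [complexWave_ofReal, Circle.smul_def, smul_eq_mul]
    ring
  rw [lineExtension, ← integral_const_mul]
  simp only [hwave, mul_left_comm]

lemma exists_lineExtension_growth {f ψ : V → ℂ} {B : ℝ} (hf : Continuous f)
    (hB : ∀ x, ‖f x‖ ≤ B) (hψ : ContDiff ℝ (⊤ : ℕ∞) ψ) (hψc : HasCompactSupport ψ) {u : V}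
    {a σ : ℝ} (hσ : ∀ ξ ∈ tsupport ψ, |⟪u, ξ⟫ - a| ≤ σ / 2) (x : V) :
    Differentiable ℂ (lineExtension f ψ u x a) ∧ ∃ (C : ℝ) (M : ℕ), ∀ z,
      ‖lineExtension f ψ u x a z‖ ≤
        C * (1 + ‖z‖) ^ M * Real.exp (Real.pi * σ * |z.im|) := by
  obtain ⟨C, M, hC0, hC⟩ :=
    exists_norm_fourier_mul_complexWave_le hψ hψc hσ (Module.finrank ℝ V + 1)
  let ω : V → ℝ := fun y => ((1 + ‖y - x‖) ^ (Module.finrank ℝ V + 1))⁻¹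
  have hω : Integrable ω := integrable_inv_one_add_norm_pow.comp_sub_right x
  have hB0 : 0 ≤ B := (norm_nonneg _).trans (hB 0)
  have hbound : ∀ z y, ‖f y * 𝓕 (fun ξ => ψ ξ * complexWave u a z ξ) (y - x)‖ ≤
      B * (C * ((1 + ‖z‖) ^ M * Real.exp (Real.pi * σ * |z.im|)) * ω y) := fun z y => by
    rw [norm_mul]
    exact mul_le_mul (hB y) (hC z (y - x)) (norm_nonneg _) hB0
  refine ⟨differentiable_integral_of_dominated
    (b := fun R y => B * (C * ((1 + R) ^ M * Real.exp (Real.pi * |σ| * R)) * ω y))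
    (fun y => (differentiable_fourier_mul_complexWave hψ.continuous hψc hσ _).const_mul _)
    (fun z => (integrable_mul_fourier hf hB (hψ.mul (contDiff_complexWave u a z))
      hψc.mul_right x).aestronglyMeasurable)
    (fun R => (hω.const_mul _).const_mul _) (fun R z y hz => (hbound z y).trans ?_),
    B * C * ∫ y, ω y, M, fun z => ?_⟩
  · have hR : 0 ≤ R := (norm_nonneg z).trans hz
    gcongr
    · exact le_abs_self σ
    · exact (Complex.abs_im_le_norm z).trans hz
  · refine (norm_integral_le_of_norm_le ((hω.const_mul _).const_mul B)
      (Eventually.of_forall (hbound z))).trans_eq ?_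
    rw [integral_const_mul, integral_const_mul]
    ring

lemma MemBernstein.exists_entire_extension {Ω : Set V} {f : V → ℂ} (hf : MemBernstein Ω f)
    (hΩ : IsCompact Ω) (x : V) {u : V} {a σ : ℝ} (h : ∀ ξ ∈ Ω, |⟪u, ξ⟫ - a| < σ / 2) :
    ∃ (F : ℂ → ℂ) (C : ℝ) (M : ℕ), Differentiable ℂ F ∧
      (∀ t : ℝ, F t = Complex.exp (-(2 * Real.pi * Complex.I * t * a)) * f (x + t • u)) ∧
      ∀ z, ‖F z‖ ≤ C * (1 + ‖z‖) ^ M * Real.exp (Real.pi * σ * |z.im|) := by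
  obtain ⟨ψ, hψ, hψc, hsub, hψΩ⟩ := exists_cutoff (U := {ξ : V | |⟪u, ξ⟫ - a| < σ / 2}) hΩ
    (isOpen_lt (by fun_prop) continuous_const) h
  obtain ⟨B, hB⟩ := hf.2.1
  obtain ⟨hdiff, C, M, hgrow⟩ := exists_lineExtension_growth hf.1 hB hψ hψc
    (fun ξ hξ => (hsub hξ).le) x
  refine ⟨lineExtension f ψ u x a, C, M, hdiff, fun t => ?_, hgrow⟩
  rw [lineExtension_ofReal, ← hf.eq_integral hΩ hψ hψc hψΩ]

lemma MemBernstein.eq_zero_of_eventually_eq_zero {Ω : Set V} {f : V → ℂ}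
    (hf : MemBernstein Ω f) (hΩ : IsCompact Ω) (x u : V) {t₀ : ℝ}
    (h : ∀ᶠ t : ℝ in nhds t₀, f (x + t • u) = 0) (t : ℝ) : f (x + t • u) = 0 := by
  obtain ⟨R, hR⟩ := (hΩ.image (by fun_prop : Continuous fun ξ => |⟪u, ξ⟫ - 0|)).bddAbove
  obtain ⟨F, -, -, hF, hFt, -⟩ := hf.exists_entire_extension hΩ x (u := u) (a := 0)
    (σ := 2 * (R + 1)) fun ξ hξ => by linarith [hR ⟨ξ, hξ, rfl⟩]
  have hofReal : Tendsto (fun s : ℝ => (s : ℂ)) (nhdsWithin t₀ {t₀}ᶜ)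
      (nhdsWithin (t₀ : ℂ) {(t₀ : ℂ)}ᶜ) :=
    Complex.continuous_ofReal.continuousWithinAt.tendsto_nhdsWithin fun _ hs =>
      Complex.ofReal_injective.ne hs
  have hfreq : ∃ᶠ z in nhdsWithin (t₀ : ℂ) {(t₀ : ℂ)}ᶜ, F z = 0 := by
    refine hofReal.frequently (Eventually.frequently ?_)
    filter_upwards [h.filter_mono nhdsWithin_le_nhds] with s hs
    rw [hFt, hs, mul_zero]
  have hF0 : F t = 0 := AnalyticOnNhd.eqOn_zero_of_preconnected_of_frequently_eq_zero
    (fun z _ => hF.analyticAt z) isPreconnected_univ (Set.mem_univ _) hfreq (Set.mem_univ (t : ℂ))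
  rw [hFt] at hF0
  exact (mul_eq_zero.1 hF0).resolve_left (Complex.exp_ne_zero _)

end EntireExtension

section Density

variable {Λ : Set ℝ}

/-- The smallest density of `Λ` in an interval of half-length `r`, whose lower limit as `r → ∞` is
the lower uniform density of `Λ`. -/
def minDensity (Λ : Set ℝ) (r : ℝ) : ℝ :=
  ⨅ x : ℝ, (Nat.card ↥(Λ ∩ closedBall x r) : ℝ) / (volume (closedBall x r)).toReal

lemma minDensity_nonneg (Λ : Set ℝ) (r : ℝ) : 0 ≤ minDensity Λ r :=
  Real.iInf_nonneg fun x => by positivity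

lemma minDensity_le {r : ℝ} (hr : 0 ≤ r) (x : ℝ) :
    minDensity Λ r ≤ (Λ ∩ closedBall x r).ncard / (2 * r) := by
  have hvol : (volume (closedBall x r)).toReal = 2 * r := by
    rw [Real.volume_closedBall, ENNReal.toReal_ofReal (by positivity)]
  rw [← hvol]
  exact ciInf_le (f := fun x => (Nat.card ↥(Λ ∩ closedBall x r) : ℝ) / _)
    ⟨0, by rintro _ ⟨x, rfl⟩; positivity⟩ x

lemma exists_ncard_lt_of_minDensity_lt {r c : ℝ} (hr : 0 < r) (h : minDensity Λ r < c) :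
    ∃ x, ((Λ ∩ closedBall x r).ncard : ℝ) < c * (2 * r) := by
  obtain ⟨x, hx⟩ := exists_lt_of_ciInf_lt h
  rw [Real.volume_closedBall, ENNReal.toReal_ofReal (by positivity),
    div_lt_iff₀ (by positivity)] at hx
  exact ⟨x, hx⟩

lemma encard_inter_closedBall_le {δ : ℝ} (hδ : 0 < δ)
    (hΛ : ∀ x ∈ Λ, ∀ y ∈ Λ, x ≠ y → δ ≤ dist x y) (x r : ℝ) :
    (Λ ∩ closedBall x r).encard ≤ (⌊2 * r / δ⌋₊ + 1 : ℕ) := by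
  have hrange : ∀ y ∈ Λ ∩ closedBall x r, 0 ≤ y - (x - r) ∧ y - (x - r) ≤ 2 * r := by
    rintro y ⟨-, hy⟩
    rw [mem_closedBall, Real.dist_eq, abs_le] at hy
    constructor <;> linarith
  have hmaps : ∀ y ∈ Λ ∩ closedBall x r,
      ⌊(y - (x - r)) / δ⌋₊ ∈ (Finset.range (⌊2 * r / δ⌋₊ + 1) : Set ℕ) := by
    intro y hy
    rw [Finset.mem_coe, Finset.mem_range, Nat.lt_succ_iff]
    exact Nat.floor_le_floor (div_le_div_of_nonneg_right (hrange y hy).2 hδ.le)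
  have hinj : Set.InjOn (fun y => ⌊(y - (x - r)) / δ⌋₊) (Λ ∩ closedBall x r) := by
    intro y hy z hz hyz
    by_contra hne
    have hlt : |(y - (x - r)) / δ - (z - (x - r)) / δ| < 1 := by
      refine Int.abs_sub_lt_one_of_floor_eq_floor ?_
      rw [← Int.natCast_floor_eq_floor (div_nonneg (hrange y hy).1 hδ.le),
        ← Int.natCast_floor_eq_floor (div_nonneg (hrange z hz).1 hδ.le)]
      exact congrArg _ hyz
    rw [← sub_div, sub_sub_sub_cancel_right, abs_div, abs_of_pos hδ, div_lt_one hδ] at hlt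
    exact absurd (hΛ y hy.1 z hz.1 hne) hlt.not_ge
  have h := Set.encard_le_encard_of_injOn hmaps hinj
  rwa [Set.encard_coe_eq_coe_finsetCard, Finset.card_range] at h

lemma UniformlyDiscrete.isCoboundedUnder_minDensity (hΛ : UniformlyDiscrete Λ) :
    IsCoboundedUnder (· ≥ ·) atTop (minDensity Λ) := by
  obtain ⟨δ, hδ, hΛ⟩ := hΛ
  refine IsBoundedUnder.isCoboundedUnder_ge ⟨1 / δ + 1, eventually_map.2 ?_⟩
  filter_upwards [eventually_ge_atTop (1 : ℝ)] with r hr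
  refine (minDensity_le (by positivity) 0).trans ((div_le_iff₀ (by positivity)).2 ?_)
  calc ((Λ ∩ closedBall 0 r).ncard : ℝ) ≤ (⌊2 * r / δ⌋₊ + 1 : ℕ) :=
        Nat.cast_le.2 (Set.encard_le_coe_iff_finite_ncard_le.1
          (encard_inter_closedBall_le hδ hΛ 0 r)).2
    _ ≤ 2 * r / δ + 1 := by
        push_cast
        gcongr
        exact Nat.floor_le (by positivity)
    _ ≤ 2 * r / δ + 2 * r := by linarith
    _ = (1 / δ + 1) * (2 * r) := by ring

lemma lowerUniformDensity_nonneg (hΛ : UniformlyDiscrete Λ) : 0 ≤ lowerUniformDensity Λ :=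
  le_liminf_of_le hΛ.isCoboundedUnder_minDensity
    (Eventually.of_forall fun r => minDensity_nonneg Λ r)

lemma eventually_mul_le_ncard {c : ℝ} (hc : c < lowerUniformDensity Λ) :
    ∀ᶠ r : ℝ in atTop, ∀ x, c * (2 * r) ≤ (Λ ∩ closedBall x r).ncard := by
  have hlt : ∀ᶠ r in atTop, c < minDensity Λ r := eventually_lt_of_lt_liminf hc
    ⟨0, eventually_map.2 (Eventually.of_forall fun r => minDensity_nonneg Λ r)⟩
  filter_upwards [hlt, eventually_gt_atTop 0] with r hr hr0 x
  exact (le_div_iff₀ (by positivity)).1 (hr.le.trans (minDensity_le hr0.le x))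

lemma UniformlyDiscrete.frequently_exists_ncard_lt (hΛ : UniformlyDiscrete Λ) {c : ℝ}
    (hc : lowerUniformDensity Λ < c) :
    ∃ᶠ r : ℝ in atTop, ∃ x, ((Λ ∩ closedBall x r).ncard : ℝ) < c * (2 * r) := by
  have hlt : ∃ᶠ r in atTop, minDensity Λ r < c :=
    frequently_lt_of_liminf_lt hΛ.isCoboundedUnder_minDensity hc
  exact (hlt.and_eventually (eventually_gt_atTop 0)).mono fun r hr =>
    exists_ncard_lt_of_minDensity_lt hr.2 hr.1

lemma UniformlyDiscrete.exists_pos_le {Q : Set ℝ} (hQ : UniformlyDiscrete Q)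
    (hQpos : Q ⊆ Set.Ioi 0) : ∃ δ > 0, ∀ q ∈ Q, δ ≤ q := by
  obtain ⟨δ, hδ, hsep⟩ := hQ
  by_cases h : ∃ q ∈ Q, q < δ
  · obtain ⟨q, hq, hqδ⟩ := h
    refine ⟨q, hQpos hq, fun p hp => ?_⟩
    by_contra! hlt
    have hdist := hsep q hq p hp hlt.ne'
    rw [Real.dist_eq, abs_of_pos (sub_pos.2 hlt)] at hdist
    linarith [Set.mem_Ioi.1 (hQpos hp)]
  · push Not at h
    exact ⟨δ, hδ, h⟩

lemma UniformlyDiscrete.exists_separation_union_neg {Q : Set ℝ} (hQ : UniformlyDiscrete Q)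
    (hQpos : Q ⊆ Set.Ioi 0) :
    ∃ δ > 0, (∀ x ∈ Q ∪ -Q, ∀ y ∈ Q ∪ -Q, x ≠ y → δ ≤ dist x y) ∧ ∀ x ∈ Q ∪ -Q, δ ≤ |x| := by
  obtain ⟨δ₀, hδ₀, hle⟩ := hQ.exists_pos_le hQpos
  obtain ⟨δ, hδ, hsep⟩ := hQ
  refine ⟨min δ δ₀, lt_min hδ hδ₀, ?_, ?_⟩
  · rintro x (hx | hx) y (hy | hy) hxy
    · exact (min_le_left _ _).trans (hsep x hx y hy hxy)
    · rw [Real.dist_eq]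
      linarith [min_le_right δ δ₀, hle x hx, hle _ hy, le_abs_self (x - y)]
    · rw [Real.dist_eq]
      linarith [min_le_right δ δ₀, hle y hy, hle _ hx, neg_le_abs (x - y)]
    · rw [← dist_neg_neg]
      exact (min_le_left _ _).trans (hsep _ hx _ hy (neg_injective.ne hxy))
  · rintro x (hx | hx)
    · exact (min_le_right _ _).trans ((hle x hx).trans (le_abs_self _))
    · exact (min_le_right _ _).trans ((hle _ hx).trans (neg_le_abs _))

end Density

section Compactness

lemma isCompact_setOf_lipschitzWith_norm_le {X : Type*} [PseudoMetricSpace X] (K : ℝ≥0) (B : ℝ) :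
    IsCompact {F : C(X, ℂ) | LipschitzWith K F ∧ ∀ x, ‖F x‖ ≤ B} := by
  refine ArzelaAscoli.isCompact_of_equicontinuous _ ?_
    (LipschitzWith.uniformEquicontinuous _ K fun F => F.2.1).equicontinuous
  have himage : ContinuousMap.toFun '' {F : C(X, ℂ) | LipschitzWith K F ∧ ∀ x, ‖F x‖ ≤ B} =
      {f | LipschitzWith K f} ∩ Set.univ.pi fun _ => closedBall 0 B := by
    ext f
    simp only [Set.mem_image, Set.mem_inter_iff, Set.mem_univ_pi, mem_closedBall_zero_iff]
    exact ⟨by rintro ⟨F, hF, rfl⟩; exact hF, fun hf => ⟨⟨f, hf.1.continuous⟩, hf, rfl⟩⟩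
  rw [himage]
  exact (isCompact_univ_pi fun _ => isCompact_closedBall _ _).inter_left
    (isClosed_setOfPred_lipschitzWith K)

variable {Ω : Set V} {f : V → ℂ}

lemma MemBernstein.comp_add_right (hf : MemBernstein Ω f) (v : V) :
    MemBernstein Ω (fun x => f (x + v)) := by
  obtain ⟨hcont, ⟨B, hB⟩, hvanish⟩ := hf
  refine ⟨hcont.comp (continuous_add_const v), ⟨B, fun x => hB _⟩, fun ψ hψ hψc hψΩ => ?_⟩
  have hsupp : tsupport (fun ξ => ψ ξ * planeWave v ξ) ∩ Ω = ∅ :=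
    Set.subset_empty_iff.1 (hψΩ ▸ Set.inter_subset_inter_left Ω tsupport_mul_subset_left)
  rw [← hvanish _ (hψ.mul (contDiff_planeWave v)) hψc.mul_right hsupp,
    ← integral_add_right_eq_self (fun x => f x * _) v]
  simp only [fourier_mul_planeWave, add_sub_cancel_right]

lemma MemBernstein.const_mul (hf : MemBernstein Ω f) (c : ℂ) :
    MemBernstein Ω (fun x => c * f x) := by
  obtain ⟨hcont, ⟨B, hB⟩, hvanish⟩ := hf
  refine ⟨continuous_const.mul hcont, ⟨‖c‖ * B, fun x => ?_⟩, fun ψ hψ hψc hψΩ => ?_⟩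
  · rw [norm_mul]
    exact mul_le_mul_of_nonneg_left (hB x) (norm_nonneg c)
  · simp only [mul_assoc]
    rw [integral_const_mul, hvanish ψ hψ hψc hψΩ, mul_zero]

lemma MemBernstein.of_tendsto {h : ℕ → V → ℂ} (hh : ∀ n, MemBernstein Ω (h n)) {B : ℝ}
    (hB : ∀ n x, ‖h n x‖ ≤ B) (hf : Continuous f)
    (hlim : ∀ x, Tendsto (fun n => h n x) atTop (nhds (f x))) : MemBernstein Ω f := by
  refine ⟨hf, ⟨B, fun x => le_of_tendsto (hlim x).norm (Eventually.of_forall fun n => hB n x)⟩,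
    fun ψ hψ hψc hψΩ => ?_⟩
  have hint := integrable_fourier_of_contDiff hψ hψc
  have htend : Tendsto (fun n => ∫ x, h n x * 𝓕 ψ x) atTop (nhds (∫ x, f x * 𝓕 ψ x)) := by
    refine tendsto_integral_of_dominated_convergence (fun y => B * ‖𝓕 ψ y‖)
      (fun n => (hh n).1.aestronglyMeasurable.mul hint.aestronglyMeasurable)
      (hint.norm.const_mul B) (fun n => Eventually.of_forall fun y => ?_)
      (Eventually.of_forall fun y => (hlim y).mul_const _)
    rw [norm_mul]
    exact mul_le_mul_of_nonneg_right (hB n y) (norm_nonneg _)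
  simp only [fun n => (hh n).2.2 ψ hψ hψc hψΩ] at htend
  exact tendsto_nhds_unique htend tendsto_const_nhds

lemma exists_subseq_tendsto_memBernstein (hΩ : IsCompact Ω) {h : ℕ → V → ℂ}
    (hh : ∀ n, MemBernstein Ω (h n)) {B : ℝ} (hB : ∀ n x, ‖h n x‖ ≤ B) :
    ∃ (φ : ℕ → ℕ) (g : V → ℂ), StrictMono φ ∧ MemBernstein Ω g ∧
      ∀ x, Tendsto (fun n => h (φ n) x) atTop (nhds (g x)) := by
  obtain ⟨L, hL0, hL⟩ := exists_lipschitz_memBernstein hΩ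
  have hB0 : 0 ≤ B := (norm_nonneg _).trans (hB 0 0)
  have hlip : ∀ n, LipschitzWith (L * B).toNNReal (h n) := fun n =>
    LipschitzWith.of_dist_le_mul fun x y => by
      rw [dist_eq_norm, dist_eq_norm, Real.coe_toNNReal _ (by positivity)]
      exact hL _ (hh n) B (hB n) x y
  obtain ⟨g, -, φ, hφ, hg⟩ := (isCompact_setOf_lipschitzWith_norm_le _ B).tendsto_subseq
    (x := fun n => (⟨h n, (hh n).1⟩ : C(V, ℂ))) fun n => ⟨hlip n, hB n⟩
  have hlim : ∀ x, Tendsto (fun n => h (φ n) x) atTop (nhds (g x)) := fun x =>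
    ((continuous_eval_const x).tendsto g).comp hg
  exact ⟨φ, g, hφ, .of_tendsto (fun n => hh (φ n)) (fun n => hB (φ n)) g.continuous hlim, hlim⟩

end Compactness

section Squares

local notation "E" => EuclideanSpace ℝ (Fin 2)

/-- The union `Q∂D` of the boundaries of the squares `q • [-1, 1]²`, `q ∈ Q`, encoded as the set
of points whose sup norm lies in `Q`. -/
def dilatedSquares (Q : Set ℝ) : Set E :=
  {p | ‖(WithLp.ofLp p : Fin 2 → ℝ)‖ ∈ Q}

lemma dilatedSquares_eq {Q : Set ℝ} (hQ : Q ⊆ Set.Ioi 0) :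
    {x : E | ∃ q ∈ Q, ∃ w ∈ frontier {x : E | ∀ i, x i ∈ Set.Icc (-1 : ℝ) 1}, x = q • w} =
      dilatedSquares Q := by
  have hsquare : {x : E | ∀ i, x i ∈ Set.Icc (-1 : ℝ) 1} =
      PiLp.homeomorph 2 (fun _ : Fin 2 => ℝ) ⁻¹' closedBall 0 1 := by
    ext y
    rw [Set.mem_preimage, mem_closedBall_zero_iff, pi_norm_le_iff_of_nonneg zero_le_one]
    simp only [Set.mem_ofPred_eq, Set.mem_Icc, Real.norm_eq_abs, abs_le]
    rfl
  have hfrontier : ∀ w : E, w ∈ frontier {x : E | ∀ i, x i ∈ Set.Icc (-1 : ℝ) 1} ↔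
      ‖(WithLp.ofLp w : Fin 2 → ℝ)‖ = 1 := fun w => by
    rw [hsquare, ← Homeomorph.preimage_frontier, frontier_closedBall _ one_ne_zero]
    exact mem_sphere_zero_iff_norm
  ext x
  simp only [Set.mem_ofPred_eq, hfrontier, dilatedSquares]
  constructor
  · rintro ⟨q, hq, w, hw, rfl⟩
    rwa [WithLp.ofLp_smul, norm_smul, hw, mul_one, Real.norm_of_nonneg (hQ hq).le]
  · intro hx
    have hpos : 0 < ‖(WithLp.ofLp x : Fin 2 → ℝ)‖ := hQ hx
    refine ⟨_, hx, ‖(WithLp.ofLp x : Fin 2 → ℝ)‖⁻¹ • x, ?_, (smul_inv_smul₀ hpos.ne' x).symm⟩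
    rw [WithLp.ofLp_smul, norm_smul, norm_inv, norm_norm, inv_mul_cancel₀ hpos.ne']

variable {i j : Fin 2}

lemma norm_ofLp_eq_abs (hij : i ≠ j) (x : E) (h : |x j| ≤ |x i|) :
    ‖(WithLp.ofLp x : Fin 2 → ℝ)‖ = |x i| := by
  refine le_antisymm ((pi_norm_le_iff_of_nonneg (abs_nonneg _)).2 fun k => ?_)
    (norm_le_pi_norm (WithLp.ofLp x) i)
  obtain rfl | rfl : k = i ∨ k = j := by omega
  · exact le_rfl
  · exact h

lemma mem_dilatedSquares_iff (hij : i ≠ j) {Q : Set ℝ} (hQ : Q ⊆ Set.Ioi 0) {p : E}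
    (h : |p j| ≤ |p i|) : p ∈ dilatedSquares Q ↔ p i ∈ Q ∪ -Q := by
  change ‖(WithLp.ofLp p : Fin 2 → ℝ)‖ ∈ Q ↔ _
  rw [norm_ofLp_eq_abs hij p h]
  constructor
  · intro hp
    rcases abs_choice (p i) with hi | hi <;> rw [hi] at hp
    · exact Or.inl hp
    · exact Or.inr hp
  · rintro (hi | hi)
    · rwa [abs_of_pos (hQ hi)]
    · rwa [abs_of_neg (neg_pos.1 (hQ hi))]

lemma eq_smul_single_add (hij : i ≠ j) (x : E) :
    x = x i • EuclideanSpace.single i (1 : ℝ) + x j • EuclideanSpace.single j (1 : ℝ) := by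
  ext k
  obtain rfl | rfl : k = i ∨ k = j := by omega
  · simp [hij]
  · simp [hij.symm]

end Squares

section Sufficiency

lemma exists_width_lt {W : Type*} [NormedAddCommGroup W] [InnerProductSpace ℝ W]
    [CompleteSpace W] {Ω : Set W} (hΩ : IsCompact Ω) (hconv : Convex ℝ Ω) (hne : Ω.Nonempty)
    {e : W} {d : ℝ} (hd : 0 ≤ d) (he : d • e ∉ Ω - Ω) :
    ∃ (u : W) (a w : ℝ), 0 < w ∧ w < d ∧ ⟪u, e⟫ = 1 ∧ ∀ ξ ∈ Ω, |⟪u, ξ⟫ - a| < w / 2 := by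
  obtain ⟨f, s, hfs, hsf⟩ := geometric_hahn_banach_closed_point (hconv.sub hconv)
    (sub_eq_add_neg Ω Ω ▸ hΩ.add hΩ.neg).isClosed he
  have hs : 0 < s := by
    obtain ⟨ξ, hξ⟩ := hne
    simpa using hfs (ξ - ξ) (Set.sub_mem_sub hξ hξ)
  rw [map_smul, smul_eq_mul] at hsf
  have hfe : 0 < f e := by
    by_contra! h
    linarith [mul_nonpos_of_nonneg_of_nonpos hd h]
  obtain ⟨u, hu⟩ : ∃ u : W, ∀ x, ⟪u, x⟫ = (f e)⁻¹ * f x :=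
    ⟨(f e)⁻¹ • (InnerProductSpace.toDual ℝ W).symm f, fun x => by
      rw [real_inner_smul_left, InnerProductSpace.toDual_symm_apply]⟩
  obtain ⟨ξ₁, hξ₁, hmax⟩ := hΩ.exists_isMaxOn hne (f := fun ξ => ⟪u, ξ⟫) (by fun_prop)
  obtain ⟨ξ₂, hξ₂, hmin⟩ := hΩ.exists_isMinOn hne (f := fun ξ => ⟪u, ξ⟫) (by fun_prop)
  have hwidth : ⟪u, ξ₁⟫ - ⟪u, ξ₂⟫ < (f e)⁻¹ * s := by
    rw [← inner_sub_right, hu]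
    exact mul_lt_mul_of_pos_left (hfs _ (Set.sub_mem_sub hξ₁ hξ₂)) (inv_pos.2 hfe)
  refine ⟨u, (⟪u, ξ₁⟫ + ⟪u, ξ₂⟫) / 2, (f e)⁻¹ * s, by positivity, ?_, ?_, fun ξ hξ => ?_⟩
  · rw [inv_mul_lt_iff₀ hfe]
    linarith
  · rw [hu, inv_mul_cancel₀ hfe.ne']
  · have hle : ⟪u, ξ⟫ ≤ ⟪u, ξ₁⟫ := hmax hξ
    have hge : ⟪u, ξ₂⟫ ≤ ⟪u, ξ⟫ := hmin hξ
    rw [abs_lt]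
    constructor <;> linarith

lemma exists_abs_add_le_sub {y A R δ : ℝ} (hR : 0 ≤ R) (hδ : 0 < δ) (hA : δ ≤ A)
    (hy : |y| ≤ A + R) : ∃ t ∈ Set.Icc (-(R + δ)) (R + δ), |y + t| ≤ A - δ := by
  rw [abs_le] at hy
  rcases le_total (R + δ) y with h | h
  · refine ⟨-(R + δ), ⟨le_rfl, by linarith⟩, abs_le.2 ⟨?_, ?_⟩⟩ <;> linarith
  · rcases le_total y (-(R + δ)) with h' | h'
    · refine ⟨R + δ, ⟨by linarith, le_rfl⟩, abs_le.2 ⟨?_, ?_⟩⟩ <;> linarith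
    · refine ⟨-y, ⟨by linarith, by linarith⟩, ?_⟩
      rw [add_neg_cancel, abs_zero]
      linarith

lemma nonempty_fin_embedding_of_le_ncard {α : Type*} {s : Set α} {m : ℕ} (h : m ≤ s.ncard) :
    Nonempty (Fin m ↪ s) := by
  rcases Nat.eq_zero_or_pos m with rfl | hm
  · exact ⟨Function.Embedding.ofIsEmpty⟩
  have := (Set.finite_of_ncard_pos (hm.trans_le h)).fintype
  refine Function.Embedding.nonempty_of_card_le ?_
  rwa [Fintype.card_fin, ← Nat.card_eq_fintype_card]

-- The points `(a, b) + w k` lie near `(a, b)` on sides of the squares of half-width `|s|`, `s ∈ S`,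
-- at distance at least `δ` from the corners, and this distance survives in the limit.
lemma exists_separated_near_of_le_ncard {S : Set ℝ} {δ : ℝ} (hδ : 0 < δ)
    (hsep : ∀ x ∈ S, ∀ y ∈ S, x ≠ y → δ ≤ dist x y) (hle : ∀ x ∈ S, δ ≤ |x|) {a b c r : ℝ}
    (hba : |b| ≤ |a|) {m : ℕ} (hm : m ≤ (S ∩ closedBall (a + c) r).ncard) :
    ∃ w : Fin m → ℝ × ℝ,
      (∀ k, w k ∈ closedBall c r ×ˢ Set.Icc (-(|c| + r + δ)) (|c| + r + δ)) ∧
      (∀ k l, k ≠ l → δ ≤ dist (w k).1 (w l).1) ∧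
      ∀ k, a + (w k).1 ∈ S ∧ |b + (w k).2| ≤ |a + (w k).1| - δ := by
  obtain ⟨s⟩ := nonempty_fin_embedding_of_le_ncard hm
  have hball : ∀ k, |(s k : ℝ) - a - c| ≤ r := fun k => by
    have := (s k).2.2
    rwa [mem_closedBall, Real.dist_eq, ← sub_sub] at this
  have hshift : ∀ k, ∃ t ∈ Set.Icc (-(|c| + r + δ)) (|c| + r + δ),
      |b + t| ≤ |(s k : ℝ)| - δ := by
    intro k
    have hr : 0 ≤ r := (abs_nonneg _).trans (hball k)
    refine exists_abs_add_le_sub (by positivity) hδ (hle _ (s k).2.1) (hba.trans ?_)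
    calc |a| = |(s k : ℝ) + -((s k : ℝ) - a - c) + -c| := by congr 1; ring
      _ ≤ |(s k : ℝ)| + |-((s k : ℝ) - a - c)| + |-c| := abs_add_three _ _ _
      _ ≤ |(s k : ℝ)| + (|c| + r) := by
        rw [abs_neg, abs_neg]
        linarith [hball k]
  choose t ht hst using hshift
  refine ⟨fun k => (s k - a, t k), fun k => ⟨mem_closedBall_iff_norm.2 (hball k), ht k⟩,
    fun k l hkl => ?_, fun k => ?_⟩
  · rw [dist_sub_right]
    exact hsep _ (s k).2.1 _ (s l).2.1 (Subtype.val_injective.ne (s.injective.ne hkl))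
  · rw [add_sub_cancel]
    exact ⟨(s k).2.1, hst k⟩

lemma eq_zero_of_tendsto_of_norm_translate_le {W : Type*} [SeminormedAddCommGroup W]
    {f : ℕ → W → ℂ} {L : ℝ} (hL : ∀ n p q, ‖f n p - f n q‖ ≤ L * ‖p - q‖) {x y : ℕ → W} {z : W}
    (hy : Tendsto y atTop (nhds z)) {ε : ℕ → ℝ} (hε : Tendsto ε atTop (nhds 0))
    (hf : ∀ n, ‖f n (y n + x n)‖ ≤ ε n) {a : ℂ}
    (hlim : Tendsto (fun n => f n (z + x n)) atTop (nhds a)) : a = 0 := by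
  have hbound : ∀ n, ‖f n (z + x n)‖ ≤ ε n + L * ‖z - y n‖ := fun n => by
    have hclose := hL n (z + x n) (y n + x n)
    rw [add_sub_add_right_eq_sub] at hclose
    linarith [hf n, norm_le_norm_add_norm_sub' (f n (z + x n)) (f n (y n + x n))]
  have hzero : Tendsto (fun n => ε n + L * ‖z - y n‖) atTop (nhds 0) := by
    simpa using hε.add (((tendsto_const_nhds (x := z)).sub hy).norm.const_mul L)
  exact tendsto_nhds_unique hlim (squeeze_zero_norm hbound hzero)

lemma isSamplingSet_of_exists_large_value {Ω P : Set V} {η : ℝ} (hη : 0 < η)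
    (h : ∀ f, MemBernstein Ω f → (∀ x, ‖f x‖ ≤ 1) → ∀ x, 1 / 2 ≤ ‖f x‖ → ∃ p ∈ P, η < ‖f p‖) :
    IsSamplingSet Ω P := by
  refine ⟨η⁻¹, inv_pos.2 hη, fun f hf x => ?_⟩
  obtain ⟨B, hB⟩ := hf.2.1
  set A := ⨆ x, ‖f x‖
  have hA : ∀ x, ‖f x‖ ≤ A := le_ciSup ⟨B, by rintro _ ⟨y, rfl⟩; exact hB y⟩
  rcases ((norm_nonneg _).trans (hA x)).eq_or_lt with hA0 | hA0
  · refine (hA x).trans (hA0.symm.le.trans (mul_nonneg (inv_pos.2 hη).le (Real.sSup_nonneg ?_)))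
    rintro _ ⟨p, -, rfl⟩
    exact norm_nonneg _
  obtain ⟨x₀, hx₀⟩ := exists_lt_of_lt_ciSup (half_lt_self hA0)
  have hnorm : ∀ y, ‖((A⁻¹ : ℝ) : ℂ) * f y‖ = A⁻¹ * ‖f y‖ := fun y => by
    rw [norm_mul, Complex.norm_real, Real.norm_of_nonneg (inv_pos.2 hA0).le]
  obtain ⟨p, hpP, hp⟩ := h _ (hf.const_mul (A⁻¹ : ℝ))
    (fun y => by rw [hnorm, inv_mul_le_iff₀ hA0, mul_one]; exact hA y) x₀
    (by rw [hnorm, le_inv_mul_iff₀ hA0]; linarith)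
  rw [hnorm, lt_inv_mul_iff₀ hA0] at hp
  rw [le_inv_mul_iff₀ hη]
  calc η * ‖f x‖ ≤ η * A := mul_le_mul_of_nonneg_left (hA x) hη.le
    _ = A * η := mul_comm _ _
    _ ≤ ‖f p‖ := hp.le
    _ ≤ sSup ((fun p => ‖f p‖) '' P) :=
      le_csSup ⟨B, by rintro _ ⟨y, -, rfl⟩; exact hB y⟩ ⟨p, hpP, rfl⟩

local notation "E" => EuclideanSpace ℝ (Fin 2)

variable {Ω : Set E} {Q : Set ℝ} {i j : Fin 2}

lemma MemBernstein.apply_line_eq_zero_of_tendsto {g : E → ℂ} (hg : MemBernstein Ω g)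
    (hΩ : IsCompact Ω) (hQ : Q ⊆ Set.Ioi 0) (hij : i ≠ j) {f : ℕ → E → ℂ} {x : ℕ → E} {L : ℝ}
    (hL : ∀ n p q, ‖f n p - f n q‖ ≤ L * ‖p - q‖) {ε : ℕ → ℝ} (hε : Tendsto ε atTop (nhds 0))
    (hf : ∀ n, ∀ p ∈ dilatedSquares Q, ‖f n p‖ ≤ ε n)
    (hlim : ∀ z, Tendsto (fun n => f n (z + x n)) atTop (nhds (g z))) {s t : ℕ → ℝ}
    {s₀ t₀ δ : ℝ} (hs : Tendsto s atTop (nhds s₀)) (ht : Tendsto t atTop (nhds t₀)) (hδ : 0 < δ)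
    (hst : ∀ n, x n i + s n ∈ Q ∪ -Q ∧ |x n j + t n| ≤ |x n i + s n| - δ) (τ : ℝ) :
    g (s₀ • EuclideanSpace.single i 1 + τ • EuclideanSpace.single j 1) = 0 := by
  refine hg.eq_zero_of_eventually_eq_zero hΩ _ _ (t₀ := t₀) ?_ τ
  filter_upwards [Metric.ball_mem_nhds t₀ hδ] with τ hτ
  rw [mem_ball, Real.dist_eq] at hτ
  have hy : Tendsto (fun n => s n • EuclideanSpace.single i (1 : ℝ) +
      (t n + (τ - t₀)) • EuclideanSpace.single j (1 : ℝ)) atTop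
      (nhds (s₀ • EuclideanSpace.single i (1 : ℝ) + τ • EuclideanSpace.single j (1 : ℝ))) := by
    have := (hs.smul_const (EuclideanSpace.single i (1 : ℝ))).add
      ((ht.add_const (τ - t₀)).smul_const (EuclideanSpace.single j (1 : ℝ)))
    rwa [add_sub_cancel] at this
  refine eq_zero_of_tendsto_of_norm_translate_le hL hy hε (fun n => hf n _ ?_) (hlim _)
  refine (mem_dilatedSquares_iff hij hQ ?_).2 ?_
  · calc
      _ = |x n j + t n + (τ - t₀)| := by simp [hij.symm, add_comm, add_left_comm, add_assoc]
      _ ≤ |x n j + t n| + |τ - t₀| := abs_add_le _ _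
      _ ≤ |x n i + s n| := by linarith [(hst n).2]
      _ = _ := by simp [hij, add_comm]
  · simpa [hij, add_comm] using (hst n).1

lemma MemBernstein.exists_zero_lines {g : E → ℂ} (hg : MemBernstein Ω g)
    (hΩ : IsCompact Ω) (hQ : Q ⊆ Set.Ioi 0) (hij : i ≠ j) {f : ℕ → E → ℂ} {x : ℕ → E} {L : ℝ}
    (hL : ∀ n p q, ‖f n p - f n q‖ ≤ L * ‖p - q‖) {ε : ℕ → ℝ} (hε : Tendsto ε atTop (nhds 0))
    (hf : ∀ n, ∀ p ∈ dilatedSquares Q, ‖f n p‖ ≤ ε n)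
    (hlim : ∀ z, Tendsto (fun n => f n (z + x n)) atTop (nhds (g z)))
    (hx : ∀ n, |x n j| ≤ |x n i|) {δ : ℝ} (hδ : 0 < δ)
    (hsep : ∀ x ∈ Q ∪ -Q, ∀ y ∈ Q ∪ -Q, x ≠ y → δ ≤ dist x y) (hle : ∀ x ∈ Q ∪ -Q, δ ≤ |x|)
    {r : ℝ} {m : ℕ} (hm : ∀ c, m ≤ ((Q ∪ -Q) ∩ closedBall c r).ncard) (c : ℝ) :
    ∃ T : Finset ℝ, T.card = m ∧ ∀ l ∈ T,
      (∀ τ : ℝ, g (l • EuclideanSpace.single i 1 + τ • EuclideanSpace.single j 1) = 0) ∧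
        |l - c| ≤ r := by
  choose w hw hwsep hwst using fun n =>
    exists_separated_near_of_le_ncard (c := c) hδ hsep hle (hx n) (hm (x n i + c))
  obtain ⟨v, hv, φ, hφ, hlimv⟩ :=
    (isCompact_univ_pi fun _ : Fin m => (isCompact_closedBall c r).prod
      (isCompact_Icc (a := -(|c| + r + δ)) (b := |c| + r + δ))).tendsto_subseq (x := w)
      fun n k _ => hw n k
  have hfst : ∀ k, Tendsto (fun n => (w (φ n) k).1) atTop (nhds (v k).1) := fun k =>
    (continuous_fst.tendsto _).comp (tendsto_pi_nhds.1 hlimv k)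
  have hsnd : ∀ k, Tendsto (fun n => (w (φ n) k).2) atTop (nhds (v k).2) := fun k =>
    (continuous_snd.tendsto _).comp (tendsto_pi_nhds.1 hlimv k)
  have hinj : Function.Injective (fun k => (v k).1) := fun k l hkl => by
    by_contra hne
    have hdist : δ ≤ dist (v k).1 (v l).1 :=
      ge_of_tendsto ((hfst k).dist (hfst l)) (Eventually.of_forall fun n => hwsep (φ n) k l hne)
    exact hδ.not_ge (hdist.trans_eq (dist_eq_zero.2 hkl))
  refine ⟨Finset.univ.image fun k => (v k).1, ?_, fun l hl => ?_⟩
  · rw [Finset.card_image_of_injective _ hinj, Finset.card_univ, Fintype.card_fin]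
  · obtain ⟨k, -, rfl⟩ := Finset.mem_image.1 hl
    exact ⟨hg.apply_line_eq_zero_of_tendsto hΩ hQ hij (fun n => hL (φ n))
      (hε.comp hφ.tendsto_atTop) (fun n => hf (φ n)) (fun z => (hlim z).comp hφ.tendsto_atTop)
      (hfst k) (hsnd k) hδ fun n => hwst (φ n) k, mem_closedBall_iff_norm.1 (hv k trivial).1⟩

lemma MemBernstein.apply_zero_eq_zero_of_zero_lines {g : E → ℂ} (hg : MemBernstein Ω g)
    (hΩ : IsCompact Ω) (hij : i ≠ j) {u : E} (hu : u i = 1) {a w : ℝ} (hw : 0 < w)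
    (hwidth : ∀ ξ ∈ Ω, |⟪u, ξ⟫ - a| < w / 2) {r : ℝ} (hr : 0 < r) {m : ℕ} (hm : w * (2 * r) < m)
    (hlines : ∀ c, ∃ T : Finset ℝ, T.card = m ∧ ∀ l ∈ T,
      (∀ τ : ℝ, g (l • EuclideanSpace.single i 1 + τ • EuclideanSpace.single j 1) = 0) ∧
        |l - c| ≤ r) : g 0 = 0 := by
  obtain ⟨F, C, M, hF, hFg, hgrow⟩ := hg.exists_entire_extension hΩ 0 hwidth
  obtain ⟨b, hrb, hbm⟩ := exists_between ((lt_div_iff₀' hw).2 hm)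
  have hF0 : F 0 = 0 := by
    refine apply_zero_eq_zero_of_dense_zeros hF hw.le hr hrb ((lt_div_iff₀' hw).1 hbm) hgrow
      fun c => ?_
    obtain ⟨T, hT, hzero⟩ := hlines c
    refine ⟨T, hT, fun l hl => ⟨?_, (hzero l hl).2⟩⟩
    rw [hFg, zero_add, eq_smul_single_add hij u, hu, one_smul, smul_add, smul_smul,
      (hzero l hl).1, mul_zero]
  have hFg0 := hFg 0
  rw [Complex.ofReal_zero, hF0] at hFg0
  simpa using hFg0.symm

lemma exists_large_value_of_notMem (hΩ : IsCompact Ω) (hconv : Convex ℝ Ω) (hne : Ω.Nonempty)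
    (hQpos : Q ⊆ Set.Ioi 0) (hQ : UniformlyDiscrete Q) (hij : i ≠ j)
    (hd : lowerUniformDensity (Q ∪ -Q) • EuclideanSpace.single i (1 : ℝ) ∉ Ω - Ω) :
    ∃ η > 0, ∀ f, MemBernstein Ω f → (∀ x, ‖f x‖ ≤ 1) → ∀ x : E, |x j| ≤ |x i| →
      1 / 2 ≤ ‖f x‖ → ∃ p ∈ dilatedSquares Q, η < ‖f p‖ := by
  by_contra! H
  obtain ⟨δ, hδ, hsep, hle⟩ := hQ.exists_separation_union_neg hQpos
  obtain ⟨u, a, w, hw, hwd, hue, hwidth⟩ :=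
    exists_width_lt hΩ hconv hne (lowerUniformDensity_nonneg ⟨δ, hδ, hsep⟩) hd
  have hui : u i = 1 := by simpa [EuclideanSpace.inner_single_right] using hue
  choose f hf hf1 x hx hfx hfP using fun n : ℕ =>
    H (1 / ((n : ℝ) + 1)) Nat.one_div_pos_of_nat
  obtain ⟨φ, g, hφ, hg, hlim⟩ := exists_subseq_tendsto_memBernstein hΩ
    (fun n => (hf n).comp_add_right (x n)) (B := 1) (fun n z => hf1 n _)
  obtain ⟨L, -, hL⟩ := exists_lipschitz_memBernstein hΩ
  obtain ⟨d, hwd, hd⟩ := exists_between hwd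
  obtain ⟨r, hdens, hr⟩ :=
    ((eventually_mul_le_ncard hd).and (eventually_gt_atTop (0 : ℝ))).exists
  have hlines := hg.exists_zero_lines hΩ hQpos hij (fun n => hL _ (hf (φ n)) 1 (hf1 (φ n)))
    (tendsto_one_div_add_atTop_nhds_zero_nat.comp hφ.tendsto_atTop) (fun n => hfP (φ n)) hlim
    (fun n => hx (φ n)) hδ hsep hle (fun c => Nat.ceil_le.2 (hdens c))
  have hg0 : g 0 = 0 := by
    refine hg.apply_zero_eq_zero_of_zero_lines hΩ hij hui hw hwidth hr ?_ hlines
    exact (mul_lt_mul_of_pos_right hwd (by positivity)).trans_le (Nat.le_ceil _)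
  have hhalf : 1 / 2 ≤ ‖g 0‖ := ge_of_tendsto (hlim 0).norm
    (Eventually.of_forall fun n => by simpa only [zero_add] using hfx (φ n))
  rw [hg0, norm_zero] at hhalf
  linarith

theorem isSamplingSet_of_notMem (hΩ : IsCompact Ω) (hconv : Convex ℝ Ω) (hne : Ω.Nonempty)
    (hQpos : Q ⊆ Set.Ioi 0) (hQ : UniformlyDiscrete Q)
    (hd : ∀ i, lowerUniformDensity (Q ∪ -Q) • EuclideanSpace.single i (1 : ℝ) ∉ Ω - Ω) :
    IsSamplingSet Ω (dilatedSquares Q) := by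
  obtain ⟨η₀, hη₀, large₀⟩ := exists_large_value_of_notMem hΩ hconv hne hQpos hQ zero_ne_one (hd 0)
  obtain ⟨η₁, hη₁, large₁⟩ := exists_large_value_of_notMem hΩ hconv hne hQpos hQ one_ne_zero (hd 1)
  refine isSamplingSet_of_exists_large_value (lt_min hη₀ hη₁) fun f hf hf1 x hx => ?_
  rcases le_total |x 1| |x 0| with h | h
  · obtain ⟨p, hpQ, hp⟩ := large₀ f hf hf1 x h hx
    exact ⟨p, hpQ, (min_le_left _ _).trans_lt hp⟩
  · obtain ⟨p, hpQ, hp⟩ := large₁ f hf hf1 x h hx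
    exact ⟨p, hpQ, (min_le_right _ _).trans_lt hp⟩

end Sufficiency

lemma memBernstein_planeWave {Ω : Set V} {ξ : V} (hξ : ξ ∈ Ω) : MemBernstein Ω (planeWave ξ) := by
  refine ⟨(contDiff_planeWave ξ).continuous, ⟨1, fun x => (norm_planeWave ξ x).le⟩,
    fun ψ hψ hψc hψΩ => ?_⟩
  rw [integral_planeWave_mul_fourier hψ hψc ξ]
  exact image_eq_zero_of_notMem_tsupport fun h =>
    Set.eq_empty_iff_forall_notMem.1 hψΩ ξ ⟨h, hξ⟩

lemma MemBernstein.zero (Ω : Set V) : MemBernstein Ω (0 : V → ℂ) :=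
  ⟨continuous_const, ⟨0, by simp⟩, by simp⟩

lemma MemBernstein.add {Ω : Set V} {f g : V → ℂ} (hf : MemBernstein Ω f)
    (hg : MemBernstein Ω g) : MemBernstein Ω (f + g) := by
  obtain ⟨hfc, ⟨A, hA⟩, hfv⟩ := hf
  obtain ⟨hgc, ⟨B, hB⟩, hgv⟩ := hg
  refine ⟨hfc.add hgc, ⟨A + B, fun x => (norm_add_le _ _).trans (add_le_add (hA x) (hB x))⟩,
    fun ψ hψ hψc hψΩ => ?_⟩
  simp only [Pi.add_apply, add_mul]
  rw [integral_add (by simpa using integrable_mul_fourier hfc hA hψ hψc 0)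
    (by simpa using integrable_mul_fourier hgc hB hψ hψc 0), hfv ψ hψ hψc hψΩ,
    hgv ψ hψ hψc hψΩ, add_zero]

section TrigPoly

variable {W : Type*} [NormedAddCommGroup W] [InnerProductSpace ℝ W] {K L : Set W} {f g : W → ℂ}

/-- The space of trigonometric polynomials with frequencies in `K`. -/
def trigPoly (K : Set W) : Submodule ℂ (W → ℂ) := Submodule.span ℂ (planeWave '' K)

lemma planeWave_mem_trigPoly {ξ : W} (hξ : ξ ∈ K) : planeWave ξ ∈ trigPoly K :=
  Submodule.subset_span ⟨ξ, hξ, rfl⟩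

lemma trigPoly_mono (h : K ⊆ L) : trigPoly K ≤ trigPoly L := Submodule.span_mono (Set.image_mono h)

lemma memBernstein_of_mem_trigPoly {Ω : Set V} {f : V → ℂ} (hf : f ∈ trigPoly Ω) :
    MemBernstein Ω f := by
  induction hf using Submodule.span_induction with
  | mem x h =>
    obtain ⟨ξ, hξ, rfl⟩ := h
    exact memBernstein_planeWave hξ
  | zero => exact MemBernstein.zero Ω
  | add x y _ _ hx hy => exact hx.add hy
  | smul a x _ hx => exact hx.const_mul a

lemma mul_mem_trigPoly (hf : f ∈ trigPoly K) (hg : g ∈ trigPoly L) :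
    f * g ∈ trigPoly (K + L) := by
  have h := Submodule.mul_mem_mul hf hg
  rw [trigPoly, trigPoly, Submodule.span_mul_span] at h
  refine Submodule.span_mono ?_ h
  rintro _ ⟨_, ⟨ξ, hξ, rfl⟩, _, ⟨η, hη, rfl⟩, rfl⟩
  exact ⟨ξ + η, Set.add_mem_add hξ hη, funext fun x => planeWave_add_left ξ η x⟩

lemma comp_affine_mem_trigPoly (hf : f ∈ trigPoly K) (c : ℝ) (v : W) :
    (fun x => f (c • x + v)) ∈ trigPoly (c • K) := by
  induction hf using Submodule.span_induction with
  | mem x h =>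
    obtain ⟨ξ, hξ, rfl⟩ := h
    have : (fun x => planeWave ξ (c • x + v)) = planeWave ξ v • planeWave (c • ξ) := by
      funext x
      rw [planeWave_add_right, planeWave_smul_right, mul_comm]
      rfl
    rw [this]
    exact Submodule.smul_mem _ _ (planeWave_mem_trigPoly (Set.smul_mem_smul_set hξ))
  | zero => exact Submodule.zero_mem _
  | add x y _ _ hx hy => exact Submodule.add_mem _ hx hy
  | smul a x _ hx => exact Submodule.smul_mem _ a hx

/-- `f` is continuous and the pointwise limit of a uniformly bounded sequence of trigonometric
polynomials with frequencies in `K`. Unlike membership in the Bernstein space, this is immediately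
seen to be compatible with products (with frequencies in the Minkowski sum). -/
def IsTrigLimit (K : Set W) (f : W → ℂ) : Prop :=
  Continuous f ∧ ∃ (h : ℕ → W → ℂ) (B : ℝ), (∀ n, h n ∈ trigPoly K) ∧ (∀ n x, ‖h n x‖ ≤ B) ∧
    ∀ x, Tendsto (fun n => h n x) atTop (nhds (f x))

namespace IsTrigLimit

lemma memBernstein {Ω : Set V} {f : V → ℂ} (hf : IsTrigLimit Ω f) : MemBernstein Ω f := by
  obtain ⟨hc, h, B, hm, hB, hl⟩ := hf
  exact MemBernstein.of_tendsto (fun n => memBernstein_of_mem_trigPoly (hm n)) hB hc hl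

lemma mono (hf : IsTrigLimit K f) (hKL : K ⊆ L) : IsTrigLimit L f := by
  obtain ⟨hc, h, B, hm, hB, hl⟩ := hf
  exact ⟨hc, h, B, fun n => trigPoly_mono hKL (hm n), hB, hl⟩

lemma of_planeWave {ξ : W} (hξ : ξ ∈ K) : IsTrigLimit K (planeWave ξ) :=
  ⟨(contDiff_planeWave ξ).continuous, fun _ => planeWave ξ, 1, fun _ => planeWave_mem_trigPoly hξ,
    fun _ x => (norm_planeWave ξ x).le, fun _ => tendsto_const_nhds⟩

lemma zero (K : Set W) : IsTrigLimit K (fun _ => 0) :=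
  ⟨continuous_const, fun _ => 0, 0, fun _ => Submodule.zero_mem _, by simp,
    fun _ => tendsto_const_nhds⟩

lemma add (hf : IsTrigLimit K f) (hg : IsTrigLimit K g) : IsTrigLimit K (fun x => f x + g x) := by
  obtain ⟨hc, h, B, hm, hB, hl⟩ := hf
  obtain ⟨hc', h', B', hm', hB', hl'⟩ := hg
  exact ⟨hc.add hc', fun n => h n + h' n, B + B', fun n => Submodule.add_mem _ (hm n) (hm' n),
    fun n x => (norm_add_le _ _).trans (add_le_add (hB n x) (hB' n x)),
    fun x => (hl x).add (hl' x)⟩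

lemma const_mul (hf : IsTrigLimit K f) (c : ℂ) : IsTrigLimit K (fun x => c * f x) := by
  obtain ⟨hc, h, B, hm, hB, hl⟩ := hf
  refine ⟨continuous_const.mul hc, fun n => c • h n, ‖c‖ * B,
    fun n => Submodule.smul_mem _ c (hm n), fun n x => ?_, fun x => (hl x).const_mul c⟩
  change ‖c * h n x‖ ≤ _
  rw [norm_mul]
  exact mul_le_mul_of_nonneg_left (hB n x) (norm_nonneg c)

lemma sum {ι : Type*} {f : ι → W → ℂ} (s : Finset ι) (hf : ∀ i ∈ s, IsTrigLimit K (f i)) :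
    IsTrigLimit K (fun x => ∑ i ∈ s, f i x) := by
  classical
  induction s using Finset.induction_on with
  | empty => simpa only [Finset.sum_empty] using zero K
  | insert a s ha ih =>
    simp only [Finset.sum_insert ha]
    exact (hf a (Finset.mem_insert_self a s)).add
      (ih fun i hi => hf i (Finset.mem_insert_of_mem hi))

lemma mul (hf : IsTrigLimit K f) (hg : IsTrigLimit L g) :
    IsTrigLimit (K + L) (fun x => f x * g x) := by
  obtain ⟨hc, h, B, hm, hB, hl⟩ := hf
  obtain ⟨hc', h', B', hm', hB', hl'⟩ := hg
  refine ⟨hc.mul hc', fun n => h n * h' n, B * B', fun n => mul_mem_trigPoly (hm n) (hm' n),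
    fun n x => ?_, fun x => (hl x).mul (hl' x)⟩
  change ‖h n x * h' n x‖ ≤ _
  rw [norm_mul]
  exact mul_le_mul (hB n x) (hB' n x) (norm_nonneg _) ((norm_nonneg _).trans (hB n x))

lemma comp_affine (hf : IsTrigLimit K f) (c : ℝ) (v : W) :
    IsTrigLimit (c • K) (fun x => f (c • x + v)) := by
  obtain ⟨hc, h, B, hm, hB, hl⟩ := hf
  exact ⟨hc.comp (by fun_prop), fun n x => h n (c • x + v), B,
    fun n => comp_affine_mem_trigPoly (hm n) c v, fun n x => hB n _, fun x => hl _⟩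

end IsTrigLimit

end TrigPoly

section Sinc

lemma sinc_two_mul (x : ℝ) : Real.sinc (2 * x) = Real.sinc x * Real.cos x := by
  rcases eq_or_ne x 0 with rfl | hx
  · simp
  · rw [Real.sinc_of_ne_zero hx, Real.sinc_of_ne_zero (by simpa using hx), Real.sin_two_mul]
    field_simp

lemma sinc_eq_sinc_mul_prod_cos (x : ℝ) (n : ℕ) :
    Real.sinc x = Real.sinc (x / 2 ^ n) * ∏ k ∈ Finset.range n, Real.cos (x / 2 ^ (k + 1)) := by
  induction n with
  | zero => simp
  | succ n ih =>
    rw [Finset.prod_range_succ, ih,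
      show x / 2 ^ n = 2 * (x / 2 ^ (n + 1)) by rw [pow_succ]; field_simp, sinc_two_mul]
    ring

-- Viète's product formula.
lemma tendsto_prod_cos_sinc (x : ℝ) :
    Tendsto (fun n : ℕ => ∏ k ∈ Finset.range n, Real.cos (x / 2 ^ (k + 1))) atTop
      (nhds (Real.sinc x)) := by
  have hsinc : Tendsto (fun n : ℕ => Real.sinc (x / 2 ^ n)) atTop (nhds 1) := by
    rw [← Real.sinc_zero]
    exact (Real.continuous_sinc.tendsto 0).comp <|
      tendsto_const_nhds.div_atTop (tendsto_pow_atTop_atTop_of_one_lt one_lt_two)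
  have hquot : Tendsto (fun n : ℕ => Real.sinc x / Real.sinc (x / 2 ^ n)) atTop
      (nhds (Real.sinc x)) := by
    have := (tendsto_const_nhds (x := Real.sinc x)).div hsinc one_ne_zero
    rwa [div_one] at this
  refine hquot.congr' ?_
  filter_upwards [hsinc.eventually_ne one_ne_zero] with n hn
  rw [div_eq_iff hn, mul_comm]
  exact sinc_eq_sinc_mul_prod_cos x n

lemma abs_sinc_pi_mul_mul_le (x : ℝ) : |Real.sinc (Real.pi * x)| * |x| ≤ 1 := by
  rcases eq_or_ne x 0 with rfl | hx
  · simp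
  · rw [Real.sinc_of_ne_zero (mul_ne_zero Real.pi_ne_zero hx), abs_div, abs_mul,
      abs_of_pos Real.pi_pos]
    calc _ = |Real.sin (Real.pi * x)| / Real.pi := by field_simp
      _ ≤ 1 / Real.pi := by gcongr; exact Real.abs_sin_le_one _
      _ ≤ 1 := by rw [div_le_one Real.pi_pos]; linarith [Real.pi_gt_three]

lemma sinc_pi_mul_intCast {k : ℤ} (hk : k ≠ 0) : Real.sinc (Real.pi * k) = 0 := by
  rw [Real.sinc_of_ne_zero (mul_ne_zero Real.pi_ne_zero (by exact_mod_cast hk)), mul_comm,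
    Real.sin_int_mul_pi, zero_div]

variable {W : Type*} [NormedAddCommGroup W] [InnerProductSpace ℝ W]

/-- The segment `{t • u | |t| ≤ r}`, the frequency set of the functions of `⟨u, x⟩` of
bandwidth `2 * r`. -/
def symmSegment (u : W) (r : ℝ) : Set W := {ξ | ∃ t : ℝ, |t| ≤ r ∧ t • u = ξ}

lemma symmSegment_mono (u : W) {r s : ℝ} (h : r ≤ s) : symmSegment u r ⊆ symmSegment u s :=
  fun _ ⟨t, ht, hξ⟩ => ⟨t, ht.trans h, hξ⟩

lemma symmSegment_add_subset (u : W) (r s : ℝ) :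
    symmSegment u r + symmSegment u s ⊆ symmSegment u (r + s) := by
  rintro _ ⟨_, ⟨t, ht, rfl⟩, _, ⟨t', ht', rfl⟩, rfl⟩
  exact ⟨t + t', (abs_add_le _ _).trans (add_le_add ht ht'), add_smul _ _ _⟩

lemma symmSegment_smul_subset (u : W) (c r : ℝ) :
    symmSegment (c • u) r ⊆ symmSegment u (|c| * r) := by
  rintro _ ⟨t, ht, rfl⟩
  refine ⟨t * c, ?_, mul_smul _ _ _⟩
  rw [abs_mul, mul_comm]
  exact mul_le_mul_of_nonneg_left ht (abs_nonneg c)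

lemma cos_mem_trigPoly (u : W) (a c : ℝ) :
    (fun x : W => (Real.cos (Real.pi * (⟪u, x⟫ + a) * (2 * c)) : ℂ)) ∈
      trigPoly (symmSegment u |c|) := by
  have : (fun x : W => (Real.cos (Real.pi * (⟪u, x⟫ + a) * (2 * c)) : ℂ)) =
      (Complex.exp (2 * Real.pi * a * c * Complex.I) / 2) • planeWave (c • u) +
      (Complex.exp (-(2 * Real.pi * a * c * Complex.I)) / 2) • planeWave ((-c) • u) := by
    funext x
    simp only [Pi.add_apply, Pi.smul_apply, smul_eq_mul, planeWave, real_inner_smul_left]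
    rw [Complex.ofReal_cos, Complex.cos, div_mul_eq_mul_div, div_mul_eq_mul_div,
      ← Complex.exp_add, ← Complex.exp_add, ← add_div]
    congr 3 <;> · push_cast; ring
  rw [this]
  exact Submodule.add_mem _
    (Submodule.smul_mem _ _ (planeWave_mem_trigPoly ⟨c, le_rfl, rfl⟩))
    (Submodule.smul_mem _ _ (planeWave_mem_trigPoly ⟨-c, (abs_neg c).le, rfl⟩))

lemma prod_cos_mem_trigPoly (u : W) (a : ℝ) (n : ℕ) :
    (fun x : W => ((∏ k ∈ Finset.range n, Real.cos (Real.pi * (⟪u, x⟫ + a) / 2 ^ (k + 1)) : ℝ) : ℂ))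
      ∈ trigPoly (symmSegment u ((1 - (2 ^ n)⁻¹) / 2)) := by
  induction n with
  | zero =>
    convert planeWave_mem_trigPoly (ξ := (0 : W)) _ using 1
    · funext x
      simp [planeWave_zero_left]
    · exact ⟨0, by simp, by simp⟩
  | succ n ih =>
    have hrad : ((1 : ℝ) - (2 ^ n)⁻¹) / 2 + |((2 : ℝ) ^ (n + 2))⁻¹| =
        (1 - (2 ^ (n + 1))⁻¹) / 2 := by
      rw [abs_of_pos (by positivity)]
      field_simp
      ring
    rw [← hrad]
    convert trigPoly_mono (symmSegment_add_subset u _ _)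
      (mul_mem_trigPoly ih (cos_mem_trigPoly u a ((2 ^ (n + 2))⁻¹))) using 1
    funext x
    rw [Finset.prod_range_succ, Pi.mul_apply, ← Complex.ofReal_mul]
    congr 4
    field_simp
    ring

lemma isTrigLimit_sinc (u : W) (a : ℝ) :
    IsTrigLimit (symmSegment u (1 / 2)) fun x => (Real.sinc (Real.pi * (⟪u, x⟫ + a)) : ℂ) := by
  refine ⟨Complex.continuous_ofReal.comp (Real.continuous_sinc.comp (by fun_prop)),
    fun n x => ((∏ k ∈ Finset.range n, Real.cos (Real.pi * (⟪u, x⟫ + a) / 2 ^ (k + 1)) : ℝ) : ℂ),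
    1, fun n => trigPoly_mono (symmSegment_mono u ?_) (prod_cos_mem_trigPoly u a n),
    fun n x => ?_, fun x => (Complex.continuous_ofReal.tendsto _).comp (tendsto_prod_cos_sinc _)⟩
  · have : (0 : ℝ) ≤ (2 ^ n)⁻¹ := by positivity
    linarith
  · rw [Complex.norm_real, Real.norm_eq_abs, Finset.abs_prod]
    exact Finset.prod_le_one (fun _ _ => abs_nonneg _) fun _ _ => Real.abs_cos_le_one _

/-- The kernel `sinc(πσt) sinc(πτt)²`: it is band-limited, interpolates at the points `k / σ`, and
decays quadratically at scale `1 / τ`. -/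
def sincKernel (σ τ t : ℝ) : ℝ :=
  Real.sinc (Real.pi * (σ * t)) * Real.sinc (Real.pi * (τ * t)) ^ 2

lemma sincKernel_zero (σ τ : ℝ) : sincKernel σ τ 0 = 1 := by simp [sincKernel]

lemma sincKernel_intCast_div {σ : ℝ} (hσ : σ ≠ 0) (τ : ℝ) {k : ℤ} (hk : k ≠ 0) :
    sincKernel σ τ (k / σ) = 0 := by
  rw [sincKernel, mul_div_cancel₀ _ hσ, sinc_pi_mul_intCast hk, zero_mul]

lemma abs_sincKernel_le_one (σ τ t : ℝ) : |sincKernel σ τ t| ≤ 1 := by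
  rw [sincKernel, abs_mul, abs_pow]
  exact mul_le_one₀ (Real.abs_sinc_le_one _) (by positivity)
    (pow_le_one₀ (abs_nonneg _) (Real.abs_sinc_le_one _))

lemma abs_sincKernel_le {σ τ t a : ℝ} (hτ : 0 < τ) (ha : 0 < a) (h : a ≤ |t|) :
    |sincKernel σ τ t| ≤ ((τ * a) ^ 2)⁻¹ := by
  have hτt : τ * a ≤ |τ * t| := by
    rw [abs_mul, abs_of_pos hτ]
    gcongr
  have hsinc : |Real.sinc (Real.pi * (τ * t))| ≤ (τ * a)⁻¹ := by
    rw [← one_div, le_div_iff₀ (mul_pos hτ ha)]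
    exact (mul_le_mul_of_nonneg_left hτt (abs_nonneg _)).trans (abs_sinc_pi_mul_mul_le _)
  rw [sincKernel, abs_mul, abs_pow, ← inv_pow]
  calc _ ≤ 1 * ((τ * a)⁻¹) ^ 2 := by
        gcongr
        exact Real.abs_sinc_le_one _
    _ = _ := one_mul _

lemma isTrigLimit_sinc_inner (u : W) (σ a : ℝ) :
    IsTrigLimit (symmSegment u (|σ| / 2))
      fun x => (Real.sinc (Real.pi * (σ * (⟪u, x⟫ - a))) : ℂ) := by
  convert (isTrigLimit_sinc (σ • u) (-(σ * a))).mono (symmSegment_smul_subset u σ _) using 1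
  · rw [mul_one_div]
  · simp only [real_inner_smul_left, mul_sub, ← sub_eq_add_neg]

lemma isTrigLimit_sincKernel_inner (u : W) (σ τ a : ℝ) :
    IsTrigLimit (symmSegment u (|σ| / 2 + |τ|)) fun x => (sincKernel σ τ (⟪u, x⟫ - a) : ℂ) := by
  have hτ := isTrigLimit_sinc_inner u τ a
  have hττ := (hτ.mul hτ).mono (symmSegment_add_subset u _ _)
  convert ((isTrigLimit_sinc_inner u σ a).mul hττ).mono (symmSegment_add_subset u _ _) using 1
  · rw [add_halves]
  · simp only [sincKernel, Complex.ofReal_mul, pow_two]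

end Sinc

section SparseWindow

lemma ncard_inter_closedBall_add_le {Λ : Set ℝ} (hΛ : UniformlyDiscrete Λ) {x y z r s R : ℝ}
    (hx : r + |x - z| ≤ R) (hy : s + |y - z| ≤ R) (hxy : r + s < |x - y|) :
    (Λ ∩ closedBall x r).ncard + (Λ ∩ closedBall y s).ncard ≤ (Λ ∩ closedBall z R).ncard := by
  obtain ⟨δ, hδ, hsep⟩ := hΛ
  have hfin : ∀ x r, (Λ ∩ closedBall x r).Finite := fun x r =>
    (Set.encard_le_coe_iff_finite_ncard_le.1 (encard_inter_closedBall_le hδ hsep x r)).1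
  have hdisj : Disjoint (Λ ∩ closedBall x r) (Λ ∩ closedBall y s) :=
    (closedBall_disjoint_closedBall hxy).mono Set.inter_subset_right Set.inter_subset_right
  rw [← Set.ncard_union_eq hdisj (hfin x r) (hfin y s)]
  exact Set.ncard_le_ncard (Set.union_subset
    (Set.inter_subset_inter_right Λ (closedBall_subset_closedBall' hx))
    (Set.inter_subset_inter_right Λ (closedBall_subset_closedBall' hy))) (hfin z R)

-- A sparse window is the union of a long one, which is not too sparse, and a shorter one, which
-- must hence be sparse; the latter can be placed on the side away from the origin.
lemma UniformlyDiscrete.exists_sparse_window {Λ : Set ℝ} (hΛ : UniformlyDiscrete Λ) {ρ : ℝ}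
    (hρ : 0 < ρ) (R₀ : ℝ) :
    ∃ R x₀ : ℝ, R₀ ≤ R ∧ 0 < R ∧ 2 * R ≤ |x₀| ∧
      ((Λ ∩ closedBall x₀ R).ncard : ℝ) ≤ (lowerUniformDensity Λ + ρ) * (2 * R) := by
  set d := lowerUniformDensity Λ
  have hshrink : Tendsto (fun r : ℝ => 3 / 4 * r + -1) atTop atTop :=
    tendsto_atTop_add_const_right _ _ (tendsto_id.const_mul_atTop (by norm_num))
  have hlower := hshrink.eventually (eventually_mul_le_ncard (show d - ρ / 8 < d by linarith))
  have hupper := hΛ.frequently_exists_ncard_lt (show d < d + ρ / 8 by linarith)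
  obtain ⟨r, ⟨x, hx⟩, hr, hrR, hrd, hr0⟩ := (hupper.and_eventually (hlower.and
    ((eventually_ge_atTop (4 * R₀)).and ((eventually_ge_atTop (32 * d / ρ)).and
      (eventually_gt_atTop 0))))).exists
  rw [div_le_iff₀ hρ] at hrd
  obtain ⟨v, hv, hvx⟩ : ∃ v : ℝ, |v| = 3 * r / 4 ∧ |v| ≤ |x + v| := by
    rcases le_total 0 x with h | h
    · refine ⟨3 * r / 4, abs_of_pos (by positivity), ?_⟩
      rw [abs_of_pos (by positivity)]
      exact le_abs.2 (Or.inl (by linarith))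
    · refine ⟨-(3 * r / 4), by rw [abs_neg, abs_of_pos (by positivity)], ?_⟩
      rw [abs_neg, abs_of_pos (by positivity)]
      exact le_abs.2 (Or.inr (by linarith))
  have hcount : (((Λ ∩ closedBall (x + v) (r / 4)).ncard +
      (Λ ∩ closedBall (x - v / 3) (3 / 4 * r + -1)).ncard : ℕ) : ℝ) ≤
      (Λ ∩ closedBall x r).ncard := by
    refine Nat.cast_le.2 (ncard_inter_closedBall_add_le hΛ ?_ ?_ ?_)
    · rw [add_sub_cancel_left, hv]
      linarith
    · rw [sub_sub_cancel_left, abs_neg, abs_div, hv, abs_of_pos three_pos]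
      linarith
    · rw [show x + v - (x - v / 3) = v * (4 / 3) by ring, abs_mul, hv,
        abs_of_pos (by norm_num : (0 : ℝ) < 4 / 3)]
      linarith
  have hsub := hr (x - v / 3)
  rw [Nat.cast_add] at hcount
  exact ⟨r / 4, x + v, by linarith, by positivity, by linarith, by nlinarith⟩

end SparseWindow

section GapFunction

lemma exists_ne_zero_sum_mul_eq_zero {k ι α : Type*} [Field k] (s : Finset ι) {F : Set α}
    (hF : F.Finite) (hcard : F.ncard < s.card) (φ : ι → α → k) :
    ∃ c : ι → k, (∃ i ∈ s, c i ≠ 0) ∧ ∀ t ∈ F, ∑ i ∈ s, c i * φ i t = 0 := by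
  classical
  have := hF.fintype
  let T : (s → k) →ₗ[k] (F → k) := Fintype.linearCombination k fun (i : s) (t : F) => φ i t
  have hlt : Module.finrank k (F → k) < Module.finrank k (s → k) := by
    rw [Module.finrank_fintype_fun_eq_card, Module.finrank_fintype_fun_eq_card,
      ← Nat.card_eq_fintype_card, Nat.card_coe_set_eq, Fintype.card_coe]
    exact hcard
  obtain ⟨c, hc, hc0⟩ := Submodule.exists_mem_ne_zero_of_ne_bot
    (LinearMap.ker_ne_bot_of_finrank_lt (f := T) hlt)
  obtain ⟨i, hi⟩ := Function.ne_iff.1 hc0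
  refine ⟨fun i => if h : i ∈ s then c ⟨i, h⟩ else 0, ⟨i, i.2, by simpa using hi⟩, fun t ht => ?_⟩
  have hTc := congrFun (LinearMap.mem_ker.1 hc) ⟨t, ht⟩
  rw [← Finset.sum_coe_sort]
  simpa [T, Fintype.linearCombination_apply] using hTc

/-- The cardinal series `∑ c k * sincKernel σ τ (t - k / σ)`, a band-limited function taking the
value `c k` at `k / σ`. -/
def cardinalSum (σ τ : ℝ) (s : Finset ℤ) (c : ℤ → ℝ) (t : ℝ) : ℝ :=
  ∑ k ∈ s, c k * sincKernel σ τ (t - k / σ)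

variable {σ τ : ℝ} {s : Finset ℤ} {c : ℤ → ℝ}

lemma cardinalSum_intCast_div (hσ : σ ≠ 0) {k : ℤ} (hk : k ∈ s) :
    cardinalSum σ τ s c (k / σ) = c k := by
  rw [cardinalSum, Finset.sum_eq_single_of_mem k hk fun l _ hl => ?_]
  · rw [sub_self, sincKernel_zero, mul_one]
  · rw [← sub_div, ← Int.cast_sub, sincKernel_intCast_div hσ _ (sub_ne_zero.2 hl.symm), mul_zero]

lemma abs_cardinalSum_le (t : ℝ) : |cardinalSum σ τ s c t| ≤ ∑ k ∈ s, |c k| := by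
  refine (Finset.abs_sum_le_sum_abs _ _).trans (Finset.sum_le_sum fun k _ => ?_)
  rw [abs_mul]
  exact mul_le_of_le_one_right (abs_nonneg _) (abs_sincKernel_le_one σ τ _)

lemma abs_cardinalSum_le_card_mul (hτ : 0 < τ) {M a t : ℝ} (ha : 0 < a)
    (hc : ∀ k ∈ s, |c k| ≤ M) (ht : ∀ k ∈ s, a ≤ |t - k / σ|) :
    |cardinalSum σ τ s c t| ≤ s.card * (M * ((τ * a) ^ 2)⁻¹) := by
  refine (Finset.abs_sum_le_sum_abs _ _).trans ?_
  rw [← nsmul_eq_mul]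
  refine Finset.sum_le_card_nsmul _ _ _ fun k hk => ?_
  rw [abs_mul]
  exact mul_le_mul (hc k hk) (abs_sincKernel_le hτ ha (ht k hk)) (abs_nonneg _)
    ((abs_nonneg _).trans (hc k hk))

lemma isTrigLimit_cardinalSum_inner {W : Type*} [NormedAddCommGroup W] [InnerProductSpace ℝ W]
    (u : W) (a : ℝ) :
    IsTrigLimit (symmSegment u (|σ| / 2 + |τ|))
      fun x => (cardinalSum σ τ s c (⟪u, x⟫ - a) : ℂ) := by
  simp only [cardinalSum, Complex.ofReal_sum, Complex.ofReal_mul, sub_sub]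
  exact IsTrigLimit.sum s fun k _ => (isTrigLimit_sincKernel_inner u σ τ _).const_mul (c k)

lemma abs_cardinalSum_le_mul_of_lt_abs {ρ ε R : ℝ} (hρ : 0 < ρ) (hσ : ρ / 2 ≤ σ)
    (hR : 2 ≤ ρ * R) (hε : 3072 * σ ^ 3 ≤ ε * (ρ ^ 4 * R)) {K : ℕ} (hK : K ≤ (σ - ρ / 8) * R)
    {M : ℝ} (hc : ∀ k ∈ Finset.Icc (-(K : ℤ)) K, |c k| ≤ M) {t : ℝ} (ht : R < |t|) :
    |cardinalSum σ (ρ / 4) (Finset.Icc (-(K : ℤ)) K) c t| ≤ ε * M := by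
  have hσ0 : 0 < σ := by linarith
  have hR0 : 0 < R := pos_of_mul_pos_right (by linarith) hρ.le
  have hM : 0 ≤ M := (abs_nonneg _).trans (hc 0 (by simp))
  have hfar : ∀ k ∈ Finset.Icc (-(K : ℤ)) K, ρ * R / (8 * σ) ≤ |t - k / σ| := fun k hk => by
    have hkK : |(k : ℝ)| ≤ K := mod_cast abs_le.2 (Finset.mem_Icc.1 hk)
    have hkσ : |(k : ℝ) / σ| ≤ R - ρ * R / (8 * σ) := by
      rw [abs_div, abs_of_pos hσ0, div_le_iff₀ hσ0]
      refine hkK.trans (hK.trans (le_of_eq ?_))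
      field_simp
    linarith [abs_sub_abs_le_abs_sub t (k / σ)]
  have hcard : ((Finset.Icc (-(K : ℤ)) K).card : ℝ) ≤ 3 * (σ * R) := by
    rw [Int.card_Icc, show ((K : ℤ) + 1 - -K).toNat = 2 * K + 1 by omega]
    push_cast
    nlinarith
  calc _ ≤ ((Finset.Icc (-(K : ℤ)) K).card : ℝ) * (M * ((ρ / 4 * (ρ * R / (8 * σ))) ^ 2)⁻¹) :=
        abs_cardinalSum_le_card_mul (by positivity) (by positivity) hc hfar
    _ ≤ 3 * (σ * R) * (M * ((ρ / 4 * (ρ * R / (8 * σ))) ^ 2)⁻¹) := by gcongr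
    _ = 3072 * σ ^ 3 / (ρ ^ 4 * R) * M := by field_simp; ring
    _ ≤ ε * M := by
      gcongr
      rwa [div_le_iff₀ (by positivity)]

variable {Λ : Set ℝ} {ρ ε : ℝ}

-- Bandwidth slightly above the density leaves more coefficients than points of `Λ` in a sparse
-- window, so some nontrivial cardinal series vanishes at all of them.
lemma UniformlyDiscrete.exists_gap_coeffs (hΛ : UniformlyDiscrete Λ) (hρ : 0 < ρ) (hε : 0 < ε)
    (hσ : σ = lowerUniformDensity Λ + ρ / 2) :
    ∃ (s : Finset ℤ) (x₀ R : ℝ) (c : ℤ → ℝ), 2 * R ≤ |x₀| ∧ 1 ≤ ε * (ρ * R) ∧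
      (∃ k ∈ s, c k ≠ 0) ∧
      (∀ t ∈ Λ, |t - x₀| ≤ R → cardinalSum σ (ρ / 4) s c (t - x₀) = 0) ∧
      ∀ M, (∀ k ∈ s, |c k| ≤ M) → ∀ t, R < |t| → |cardinalSum σ (ρ / 4) s c t| ≤ ε * M := by
  have hd : 0 ≤ lowerUniformDensity Λ := lowerUniformDensity_nonneg hΛ
  obtain ⟨R, x₀, hRmax, hR, hx₀, hcard⟩ := hΛ.exists_sparse_window (show 0 < ρ / 8 by positivity)
    (max (2 / ρ) (max (3072 * σ ^ 3 / (ε * ρ ^ 4)) (1 / (ε * ρ))))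
  obtain ⟨hRρ, hRσ, hRε⟩ := by simpa only [max_le_iff] using hRmax
  rw [div_le_iff₀ (by positivity)] at hRρ hRσ hRε
  have hK := Nat.floor_le (show 0 ≤ (σ - ρ / 8) * R from mul_nonneg (by linarith) hR.le)
  have hK' := Nat.lt_floor_add_one ((σ - ρ / 8) * R)
  set K : ℕ := ⌊(σ - ρ / 8) * R⌋₊
  obtain ⟨δ, hδ, hsep⟩ := hΛ
  obtain ⟨c, hc0, hc⟩ := exists_ne_zero_sum_mul_eq_zero (Finset.Icc (-(K : ℤ)) K)
    (Set.encard_le_coe_iff_finite_ncard_le.1 (encard_inter_closedBall_le hδ hsep x₀ R)).1 (by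
      rw [Int.card_Icc, show ((K : ℤ) + 1 - -K).toNat = 2 * K + 1 by omega]
      have : ((Λ ∩ closedBall x₀ R).ncard : ℝ) < 2 * K + 1 := by nlinarith
      exact_mod_cast this) (fun k t => sincKernel σ (ρ / 4) (t - x₀ - k / σ))
  exact ⟨Finset.Icc (-(K : ℤ)) K, x₀, R, c, hx₀, by linarith, hc0,
    fun t ht htR => hc t ⟨ht, by rwa [mem_closedBall, Real.dist_eq]⟩,
    fun M hM t ht => abs_cardinalSum_le_mul_of_lt_abs hρ (by linarith) (by linarith)
      (by linarith) hK hM ht⟩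

lemma UniformlyDiscrete.exists_gap_function (hΛ : UniformlyDiscrete Λ) (hρ : 0 < ρ) (hε : 0 < ε)
    (W : Type*) [NormedAddCommGroup W] [InnerProductSpace ℝ W] :
    ∃ (g : ℝ → ℝ) (x₀ R : ℝ), 2 * R ≤ |x₀| ∧ 1 ≤ ε * (ρ * R) ∧ (∀ t, |g t| ≤ 1) ∧
      (∃ t, 1 / 2 ≤ |g t|) ∧ (∀ t ∈ Λ, |t - x₀| ≤ R → g t = 0) ∧
      (∀ t, R < |t - x₀| → |g t| ≤ ε) ∧
      ∀ u : W, IsTrigLimit (symmSegment u ((lowerUniformDensity Λ + ρ) / 2))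
        fun x => (g ⟪u, x⟫ : ℂ) := by
  set σ := lowerUniformDensity Λ + ρ / 2 with hσ
  have hσ0 : 0 < σ := by linarith [lowerUniformDensity_nonneg hΛ]
  obtain ⟨s, x₀, R, c, hx₀, hR, ⟨k, hk, hck⟩, hzero, hsmall⟩ := hΛ.exists_gap_coeffs hρ hε hσ
  set G := cardinalSum σ (ρ / 4) s c
  have hbdd : BddAbove (Set.range fun t => |G t|) :=
    ⟨∑ k ∈ s, |c k|, Set.forall_mem_range.2 abs_cardinalSum_le⟩
  set M := ⨆ t, |G t|
  have hGM : ∀ t, |G t| ≤ M := le_ciSup hbdd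
  have hcM : ∀ k ∈ s, |c k| ≤ M := fun k hk => by
    rw [← cardinalSum_intCast_div (τ := ρ / 4) (c := c) hσ0.ne' hk]
    exact hGM _
  have hM : 0 < M := (abs_pos.2 hck).trans_le (hcM k hk)
  have habs : ∀ t, |M⁻¹ * G (t - x₀)| = |G (t - x₀)| / M := fun t => by
    rw [abs_mul, abs_of_pos (inv_pos.2 hM), inv_mul_eq_div]
  refine ⟨fun t => M⁻¹ * G (t - x₀), x₀, R, hx₀, hR, fun t => ?_, ?_, fun t ht htR => ?_,
    fun t ht => ?_, fun u => ?_⟩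
  · rw [habs, div_le_one hM]
    exact hGM _
  · obtain ⟨t, ht⟩ := exists_lt_of_lt_ciSup (half_lt_self hM)
    refine ⟨t + x₀, ?_⟩
    rw [habs, add_sub_cancel_right, le_div_iff₀ hM]
    linarith
  · simp only [hzero t ht htR, mul_zero]
  · rw [habs, div_le_iff₀ hM]
    exact hsmall M hcM _ ht
  · have hG := isTrigLimit_cardinalSum_inner (σ := σ) (τ := ρ / 4) (s := s) (c := c) u x₀
    convert hG.const_mul (M⁻¹ : ℝ) using 1
    · rw [abs_of_pos hσ0, abs_of_pos (show 0 < ρ / 4 by positivity)]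
      congr 1
      linarith
    · simp only [Complex.ofReal_mul, G]

end GapFunction

section Bump

variable {W : Type*} [NormedAddCommGroup W] [InnerProductSpace ℝ W]

lemma symmSegment_subset_closedBall {u : W} (hu : ‖u‖ = 1) (r : ℝ) :
    symmSegment u r ⊆ closedBall 0 r := by
  rintro _ ⟨t, ht, rfl⟩
  rwa [mem_closedBall_zero_iff, norm_smul, hu, mul_one]

lemma symmSegment_add_subset_add_closedBall {u : W} (hu : ‖u‖ = 1) {r s : ℝ} (hr : 0 ≤ r)
    (hs : 0 ≤ s) : symmSegment u (r + s) ⊆ symmSegment u r + closedBall 0 s := by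
  rintro _ ⟨t, ht, rfl⟩
  obtain ⟨w, hw, hwt⟩ : ∃ w, |w| ≤ r ∧ |t - w| ≤ s := by
    refine ⟨max (-r) (min r t),
      abs_le.2 ⟨le_max_left _ _, max_le (by linarith) (min_le_left _ _)⟩, ?_⟩
    rw [abs_le] at ht ⊢
    rcases max_cases (-r) (min r t) with h | h <;> rcases min_cases r t with h' | h' <;>
      constructor <;> linarith
  refine ⟨w • u, ⟨w, hw, rfl⟩, (t - w) • u, ?_, by module⟩
  rwa [mem_closedBall_zero_iff, norm_smul, hu, mul_one]

lemma symmSegment_add_symmSegment_subset {u v : W} (hu : ‖u‖ = 1) (hv : ‖v‖ = 1) {r ρ : ℝ}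
    (hr : 0 ≤ r) (hρ : 0 ≤ ρ) :
    symmSegment u (r + ρ / 2) + symmSegment v (ρ / 2) ⊆ symmSegment u r + closedBall 0 ρ := by
  refine (Set.add_subset_add (symmSegment_add_subset_add_closedBall hu hr (by positivity))
    (symmSegment_subset_closedBall hv _)).trans ?_
  rw [add_assoc]
  refine Set.add_subset_add_left ?_
  rintro _ ⟨ξ, hξ, η, hη, rfl⟩
  rw [mem_closedBall_zero_iff] at hξ hη ⊢
  linarith [norm_add_le ξ η]

lemma IsTrigLimit.prod {ι : Type*} {f : ι → W → ℂ} {r : ℝ} (s : Finset ι)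
    (hf : ∀ i ∈ s, IsTrigLimit (closedBall 0 r) (f i)) :
    IsTrigLimit (closedBall 0 (s.card * r)) fun x => ∏ i ∈ s, f i x := by
  classical
  induction s using Finset.induction_on with
  | empty =>
    simpa [funext planeWave_zero_left] using
      of_planeWave (mem_closedBall_self (x := (0 : W)) le_rfl)
  | insert a s ha ih =>
    simp only [Finset.prod_insert ha, Finset.card_insert_of_notMem ha]
    refine ((hf a (Finset.mem_insert_self a s)).mul
      (ih fun i hi => hf i (Finset.mem_insert_of_mem hi))).mono ?_
    rintro _ ⟨ξ, hξ, η, hη, rfl⟩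
    rw [mem_closedBall_zero_iff] at hξ hη ⊢
    push_cast
    linarith [norm_add_le ξ η]

lemma exists_bump {W : Type*} [NormedAddCommGroup W] [InnerProductSpace ℝ W]
    [FiniteDimensional ℝ W] {r : ℝ} (hr : 0 < r) :
    ∃ (H : W → ℂ) (A : ℝ), IsTrigLimit (closedBall 0 r) H ∧ H 0 = 1 ∧ (∀ v, ‖H v‖ ≤ 1) ∧
      ∀ v, ‖H v‖ * ‖v‖ ≤ A := by
  let b := stdOrthonormalBasis ℝ W
  set n := Module.finrank ℝ W
  set a := r / (n + 1) with ha
  have ha0 : 0 < a := by positivity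
  set F : Fin n → W → ℝ := fun i v => Real.sinc (Real.pi * (a * (⟪b i, v⟫ - 0))) with hF
  have hF1 : ∀ i v, |F i v| ≤ 1 := fun i v => Real.abs_sinc_le_one _
  refine ⟨fun v => ∏ i, (F i v : ℂ), ∑ _i : Fin n, a⁻¹, ?_, ?_, fun v => ?_, fun v => ?_⟩
  · refine (IsTrigLimit.prod Finset.univ fun i _ => (isTrigLimit_sinc_inner (b i) a 0).mono
      (symmSegment_subset_closedBall (b.norm_eq_one i) _)).mono (closedBall_subset_closedBall ?_)
    rw [Finset.card_fin, abs_of_pos ha0, ha]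
    field_simp
    linarith
  · simp [hF]
  · simp only [norm_prod, Complex.norm_real, Real.norm_eq_abs]
    exact Finset.prod_le_one (fun _ _ => abs_nonneg _) fun i _ => hF1 i v
  · have hv : ‖v‖ ≤ ∑ i, |⟪b i, v⟫| := by
      conv_lhs => rw [← b.sum_repr' v]
      refine (norm_sum_le _ _).trans_eq (Finset.sum_congr rfl fun i _ => ?_)
      rw [norm_smul, b.norm_eq_one, mul_one, Real.norm_eq_abs]
    simp only [norm_prod, Complex.norm_real, Real.norm_eq_abs]
    refine (mul_le_mul_of_nonneg_left hv (by positivity)).trans ?_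
    rw [Finset.mul_sum]
    refine Finset.sum_le_sum fun i _ => ?_
    have hi := abs_sinc_pi_mul_mul_le (a * (⟪b i, v⟫ - 0))
    rw [abs_mul a, abs_of_pos ha0, sub_zero] at hi
    calc _ ≤ |F i v| * |⟪b i, v⟫| := by
          gcongr
          rw [← Finset.mul_prod_erase _ _ (Finset.mem_univ i)]
          exact mul_le_of_le_one_right (abs_nonneg _)
            (Finset.prod_le_one (fun _ _ => abs_nonneg _) fun i _ => hF1 i v)
      _ ≤ a⁻¹ := by
          rw [← one_div, le_div_iff₀ ha0]
          simpa only [hF, sub_zero, mul_assoc, mul_comm a] using hi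

end Bump

section Average

lemma sum_dyadic_le {R : ℝ} (hR : 0 ≤ R) (N : ℕ) :
    ∑ l ∈ Finset.range N, R / 2 ^ (l + 1) / ((1 + 2 * (R / 2 ^ (l + 1))) * (1 + R / 2 ^ (l + 1)))
      ≤ 1 := by
  have htelescope : ∀ l ∈ Finset.range N,
      R / 2 ^ (l + 1) / ((1 + 2 * (R / 2 ^ (l + 1))) * (1 + R / 2 ^ (l + 1))) =
        R / 2 ^ l / (1 + R / 2 ^ l) - R / 2 ^ (l + 1) / (1 + R / 2 ^ (l + 1)) := by
    intro l _
    have hdouble : R / 2 ^ l = 2 * (R / 2 ^ (l + 1)) := by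
      rw [pow_succ]
      field_simp
    have hnonneg : 0 ≤ R / 2 ^ (l + 1) := by positivity
    rw [hdouble]
    generalize R / 2 ^ (l + 1) = t at *
    field_simp
    ring
  rw [Finset.sum_congr rfl htelescope, Finset.sum_range_sub', pow_zero, div_one]
  have hfirst : R / (1 + R) ≤ 1 := by
    rw [div_le_one (by positivity)]
    linarith
  have hlast : 0 ≤ R / 2 ^ N / (1 + R / 2 ^ N) := by positivity
  linarith

lemma le_six_mul_div {A b t : ℝ} (ht : 0 ≤ t) (hsmall : b ≤ A * t) (hlarge : b * t ≤ A) :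
    b ≤ 6 * A * (t / ((1 + 2 * t) * (1 + t))) := by
  rw [← mul_div_assoc, le_div_iff₀ (by positivity)]
  nlinarith [mul_le_mul_of_nonneg_right hlarge ht]

variable {W : Type*} [NormedAddCommGroup W] [InnerProductSpace ℝ W] {f H : W → ℂ} {K L : Set W}

/-- The function `f` contracted by the factor `1 - s` about `y`, localised around `y` by the factor
`H (s • (x - y))`, and modulated by the plane wave of frequency `θ`. -/
def contraction (f H : W → ℂ) (θ y : W) (s : ℝ) (x : W) : ℂ :=
  planeWave θ (x - y) * (f ((1 - s) • x + s • y) * H (s • (x - y)))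

lemma contraction_self (hH : H 0 = 1) (θ y : W) (s : ℝ) : contraction f H θ y s y = f y := by
  rw [contraction, sub_self, planeWave_zero_right, smul_zero, hH, ← add_smul, sub_add_cancel,
    one_smul, one_mul, mul_one]

lemma isTrigLimit_contraction (hf : IsTrigLimit K f) (hH : IsTrigLimit L H) (θ y : W) (s : ℝ) :
    IsTrigLimit ({θ} + ((1 - s) • K + s • L)) (contraction f H θ y s) := by
  convert ((IsTrigLimit.of_planeWave (Set.mem_singleton θ)).comp_affine 1 (-y)).mul
    ((hf.comp_affine (1 - s) (s • y)).mul (hH.comp_affine s (-(s • y)))) using 1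
  · rw [one_smul]
  · funext x
    rw [contraction, one_smul, ← sub_eq_add_neg, ← sub_eq_add_neg, smul_sub]

lemma norm_contraction_le {A : ℝ} (hf : ∀ x, ‖f x‖ ≤ 1)
    (hfA : ∀ x z, ‖f x - f z‖ ≤ A * ‖x - z‖) (hH : ∀ v, ‖H v‖ ≤ 1)
    (hHA : ∀ v, ‖H v‖ * ‖v‖ ≤ A / 2) (θ y : W) {s t : ℝ} (hs : 0 ≤ s) (p : W)
    (ht : t = s * ‖p - y‖) :
    ‖contraction f H θ y s p‖ ≤ ‖f p‖ + 6 * A * (t / ((1 + 2 * t) * (1 + t))) := by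
  set z := (1 - s) • p + s • y with hz
  set h := ‖H (s • (p - y))‖
  have ht0 : 0 ≤ t := ht ▸ by positivity
  have hht : h * t ≤ A / 2 := by
    simpa only [ht, norm_smul, Real.norm_of_nonneg hs] using hHA (s • (p - y))
  have hzp : ‖z - p‖ = t := by
    rw [hz, show (1 - s) • p + s • y - p = (-s) • (p - y) by module, norm_smul, norm_neg,
      Real.norm_of_nonneg hs, ht]
  have hdiff : ‖f z - f p‖ * h ≤ 6 * A * (t / ((1 + 2 * t) * (1 + t))) := by
    refine le_six_mul_div ht0 ?_ ?_
    · calc ‖f z - f p‖ * h ≤ ‖f z - f p‖ := mul_le_of_le_one_right (norm_nonneg _) (hH _)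
        _ ≤ A * t := hzp ▸ hfA z p
    · calc ‖f z - f p‖ * h * t = ‖f z - f p‖ * (h * t) := mul_assoc _ _ _
        _ ≤ 2 * (A / 2) := mul_le_mul (by linarith [norm_sub_le (f z) (f p), hf z, hf p]) hht
          (by positivity) zero_le_two
        _ = A := mul_div_cancel₀ A two_ne_zero
  have hfz : ‖f z‖ ≤ ‖f p‖ + ‖f z - f p‖ := by
    simpa only [add_sub_cancel] using norm_add_le (f p) (f z - f p)
  calc ‖contraction f H θ y s p‖ = ‖f z‖ * h := by
        rw [contraction, norm_mul, norm_mul, norm_planeWave, one_mul]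
    _ ≤ (‖f p‖ + ‖f z - f p‖) * h := by gcongr
    _ = ‖f p‖ * h + ‖f z - f p‖ * h := add_mul _ _ _
    _ ≤ _ := add_le_add (mul_le_of_le_one_right (norm_nonneg _) (hH _)) hdiff

-- At each point the errors at the different dyadic scales form a telescoping series, so that their
-- average is `O(1 / N)`.
lemma norm_average_contraction_le {A : ℝ} (hf : ∀ x, ‖f x‖ ≤ 1)
    (hfA : ∀ x z, ‖f x - f z‖ ≤ A * ‖x - z‖) (hH : ∀ v, ‖H v‖ ≤ 1)
    (hHA : ∀ v, ‖H v‖ * ‖v‖ ≤ A / 2) (hA : 0 ≤ A) (θ : ℕ → W) (y : W) {N : ℕ} (hN : N ≠ 0)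
    (p : W) :
    ‖(N : ℂ)⁻¹ * ∑ l ∈ Finset.range N, contraction f H (θ l) y (1 / 2 ^ (l + 1)) p‖ ≤
      ‖f p‖ + 6 * A / N := by
  have hN0 : 0 < (N : ℝ) := by positivity
  have hsum : ‖∑ l ∈ Finset.range N, contraction f H (θ l) y (1 / 2 ^ (l + 1)) p‖ ≤
      N * ‖f p‖ + 6 * A := by
    refine (norm_sum_le_of_le _ fun l _ => norm_contraction_le hf hfA hH hHA (θ l) y
      (by positivity) p (one_div_mul_eq_div _ _).symm).trans ?_
    rw [Finset.sum_add_distrib, Finset.sum_const, Finset.card_range, nsmul_eq_mul,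
      ← Finset.mul_sum]
    exact add_le_add le_rfl
      (mul_le_of_le_one_right (by positivity) (sum_dyadic_le (norm_nonneg _) N))
  rw [norm_mul, norm_inv, Complex.norm_natCast, inv_mul_le_iff₀ hN0]
  refine hsum.trans_eq ?_
  field_simp

lemma singleton_add_contracted_subset {W : Type*} [NormedAddCommGroup W] [NormedSpace ℝ W]
    {Ω S : Set W} (hconv : Convex ℝ Ω) {m b : W} (hS : ∀ ξ ∈ S, m + ξ ∈ Ω) {r ρ s : ℝ}
    (hb : closedBall b r ⊆ Ω) (hs0 : 0 < s) (hs1 : s ≤ 1) (hρs : ρ ≤ s * r / 2) :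
    {(1 - s) • m + s • b} + ((1 - s) • (S + closedBall 0 ρ) + s • closedBall 0 (r / 2)) ⊆ Ω := by
  rintro _ ⟨_, rfl, _, ⟨_, ⟨_, ⟨ξ, hξ, v, hv, rfl⟩, rfl⟩, _, ⟨ζ, hζ, rfl⟩, rfl⟩, rfl⟩
  rw [mem_closedBall_zero_iff] at hv hζ
  have hball : b + (ζ + ((1 - s) / s) • v) ∈ Ω := by
    refine hb ?_
    rw [mem_closedBall, dist_eq_norm, add_sub_cancel_left]
    have hscaled : ‖((1 - s) / s) • v‖ ≤ r / 2 := by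
      rw [norm_smul, Real.norm_of_nonneg (div_nonneg (by linarith) hs0.le), div_mul_eq_mul_div,
        div_le_iff₀ hs0]
      nlinarith [norm_nonneg v]
    linarith [norm_add_le ζ (((1 - s) / s) • v)]
  convert hconv (hS ξ hξ) hball (by linarith : 0 ≤ 1 - s) hs0.le (by ring) using 1
  rw [smul_add s, smul_add s, smul_smul, mul_div_cancel₀ _ hs0.ne']
  module

end Average

section Necessity

lemma interior_nonempty_of_volume_pos {Ω : Set V} (hconv : Convex ℝ Ω) (hΩ : 0 < volume Ω) :
    (interior Ω).Nonempty := by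
  rw [Set.nonempty_iff_ne_empty]
  intro h
  refine hΩ.ne' (measure_mono_null ?_ (hconv.addHaar_frontier volume))
  rw [frontier, h, Set.sdiff_empty]
  exact subset_closure

lemma exists_memBernstein_averaged {Ω S : Set V} (hconv : Convex ℝ Ω) {m b : V}
    (hS : ∀ ξ ∈ S, m + ξ ∈ Ω)
    {r A : ℝ} (hr : 0 ≤ r) (hb : closedBall b r ⊆ Ω) (hA : 0 ≤ A) {H : V → ℂ}
    (hH : IsTrigLimit (closedBall 0 (r / 2)) H) (hH0 : H 0 = 1) (hH1 : ∀ v, ‖H v‖ ≤ 1)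
    (hHA : ∀ v, ‖H v‖ * ‖v‖ ≤ A / 2) {N : ℕ} (hN : N ≠ 0) {ρ : ℝ} (hρ : ρ ≤ 1 / 2 ^ N * r / 2)
    {f : V → ℂ} (hf : IsTrigLimit (S + closedBall 0 ρ) f) (hf1 : ∀ x, ‖f x‖ ≤ 1)
    (hfA : ∀ x z, ‖f x - f z‖ ≤ A * ‖x - z‖) (y : V) :
    ∃ F, MemBernstein Ω F ∧ F y = f y ∧ ∀ p, ‖F p‖ ≤ ‖f p‖ + 6 * A / N := by
  let θ : ℕ → V := fun l => (1 - 1 / 2 ^ (l + 1) : ℝ) • m + (1 / 2 ^ (l + 1) : ℝ) • b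
  have hcontraction : ∀ l ∈ Finset.range N,
      IsTrigLimit Ω (contraction f H (θ l) y (1 / 2 ^ (l + 1))) := by
    intro l hl
    have hs1 : (1 / 2 ^ (l + 1) : ℝ) ≤ 1 := by
      rw [div_le_one (by positivity)]
      exact one_le_pow₀ one_le_two
    have hρl : ρ ≤ 1 / 2 ^ (l + 1) * r / 2 := by
      refine hρ.trans ?_
      gcongr
      · exact one_le_two
      · exact Finset.mem_range.1 hl
    exact (isTrigLimit_contraction hf hH (θ l) y _).mono
      (singleton_add_contracted_subset hconv hS hb (by positivity) hs1 hρl)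
  refine ⟨_, ((IsTrigLimit.sum _ hcontraction).const_mul (N : ℂ)⁻¹).memBernstein, ?_,
    norm_average_contraction_le hf1 hfA hH1 hHA hA θ y hN⟩
  simp only [contraction_self hH0, Finset.sum_const, Finset.card_range, nsmul_eq_mul]
  rw [inv_mul_cancel_left₀ (Nat.cast_ne_zero.2 hN)]

-- Modulated by a plane wave, `f` has spectrum in a thin neighbourhood of `m + S ⊆ Ω`; contracting
-- the spectrum towards an interior point of `Ω` absorbs the thickness.
theorem not_isSamplingSet_of_forall_exists_small {Ω S P : Set V} (hconv : Convex ℝ Ω)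
    (hbdd : Bornology.IsBounded Ω) (hint : (interior Ω).Nonempty) {m : V}
    (hS : ∀ ξ ∈ S, m + ξ ∈ Ω)
    (hsmall : ∀ ρ > 0, ∀ ε > 0, ∃ f, IsTrigLimit (S + closedBall 0 ρ) f ∧ (∀ x, ‖f x‖ ≤ 1) ∧
      (∃ y, 1 / 2 ≤ ‖f y‖) ∧ ∀ p ∈ P, ‖f p‖ ≤ ε) :
    ¬ IsSamplingSet Ω P := by
  rintro ⟨C, hC, hsamp⟩
  obtain ⟨b, hb⟩ := hint
  obtain ⟨r, hr, hbr⟩ := nhds_basis_closedBall.mem_iff.1 (mem_interior_iff_mem_nhds.1 hb)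
  obtain ⟨R, hR⟩ := hbdd.subset_closedBall m
  obtain ⟨L, hL0, hL⟩ := exists_lipschitz_memBernstein (isCompact_closedBall (0 : V) (R + 1))
  obtain ⟨H, A₀, hH, hH0, hH1, hHA⟩ := exists_bump (W := V) (half_pos hr)
  set A := max L (2 * A₀)
  have hA : 0 ≤ A := hL0.trans (le_max_left _ _)
  obtain ⟨N, hN⟩ := exists_nat_gt (48 * A * C)
  have hN0 : 0 < (N : ℝ) := lt_of_le_of_lt (by positivity) hN
  set ρ := min 1 (1 / 2 ^ N * r / 2)
  obtain ⟨f, hf, hf1, ⟨y, hy⟩, hfP⟩ := hsmall ρ (lt_min one_pos (by positivity)) (1 / (8 * C))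
    (by positivity)
  have hspec : S + closedBall 0 ρ ⊆ closedBall 0 (R + 1) := by
    rintro _ ⟨ξ, hξ, v, hv, rfl⟩
    have hξR := hR (hS ξ hξ)
    rw [mem_closedBall, dist_eq_norm, add_sub_cancel_left] at hξR
    rw [mem_closedBall_zero_iff] at hv ⊢
    linarith [norm_add_le ξ v, min_le_left 1 (1 / 2 ^ N * r / 2)]
  have hfA : ∀ x z, ‖f x - f z‖ ≤ A * ‖x - z‖ := fun x z =>
    (hL f (hf.mono hspec).memBernstein 1 hf1 x z).trans <|
      mul_le_mul_of_nonneg_right ((mul_one L).trans_le (le_max_left _ _)) (norm_nonneg _)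
  obtain ⟨F, hF, hFy, hFP⟩ := exists_memBernstein_averaged hconv hS hr.le hbr hA hH hH0 hH1
    (fun v => (hHA v).trans (by linarith [le_max_right L (2 * A₀)])) (Nat.cast_ne_zero.1 hN0.ne')
    (min_le_right _ _) hf hf1 hfA y
  have hsup : sSup ((fun p => ‖F p‖) '' P) ≤ 1 / (8 * C) + 6 * A / N := by
    refine Real.sSup_le ?_ (by positivity)
    rintro _ ⟨p, hp, rfl⟩
    exact (hFP p).trans (add_le_add (hfP p hp) le_rfl)
  have herror : C * (6 * A / N) < 1 / 8 := by
    rw [mul_div_assoc', div_lt_iff₀ hN0]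
    linarith
  have hlower := hsamp F hF y
  have hC8 : C * (1 / (8 * C)) = 1 / 8 := by field_simp
  rw [hFy] at hlower
  nlinarith [mul_le_mul_of_nonneg_left hsup hC.le]

lemma abs_sinc_pi_mul_le {ε a x : ℝ} (hε : 0 < ε) (hεa : 1 ≤ ε * a) (hx : a ≤ |x|) :
    |Real.sinc (Real.pi * x)| ≤ ε := by
  have ha : 0 < a := pos_of_mul_pos_right (one_pos.trans_le hεa) hε.le
  refine le_of_mul_le_mul_right ?_ ha
  exact (mul_le_mul_of_nonneg_left hx (abs_nonneg _)).trans
    ((abs_sinc_pi_mul_mul_le x).trans hεa)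

local notation "E" => EuclideanSpace ℝ (Fin 2)

variable {Q : Set ℝ} {i j : Fin 2}

lemma exists_small_on_dilatedSquares (hQpos : Q ⊆ Set.Ioi 0) (hQ : UniformlyDiscrete Q)
    (hij : i ≠ j) {ρ ε : ℝ} (hρ : 0 < ρ) (hε : 0 < ε) :
    ∃ f : E → ℂ, IsTrigLimit
      (symmSegment (EuclideanSpace.single i (1 : ℝ)) (lowerUniformDensity (Q ∪ -Q) / 2) +
        closedBall 0 ρ) f ∧
      (∀ x, ‖f x‖ ≤ 1) ∧ (∃ y, 1 / 2 ≤ ‖f y‖) ∧ ∀ p ∈ dilatedSquares Q, ‖f p‖ ≤ ε := by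
  obtain ⟨δ, hδ, hsep, -⟩ := hQ.exists_separation_union_neg hQpos
  have hdisc : UniformlyDiscrete (Q ∪ -Q) := ⟨δ, hδ, hsep⟩
  have hd0 := lowerUniformDensity_nonneg hdisc
  obtain ⟨g, x₀, R, hR, hεR, hg1, ⟨t, ht⟩, hg0, hgε, hg⟩ := hdisc.exists_gap_function hρ hε E
  have hnorm : ∀ x : E, ‖(g (x i) : ℂ) * (Real.sinc (Real.pi * (ρ * x j)) : ℂ)‖ =
      |g (x i)| * |Real.sinc (Real.pi * (ρ * x j))| := fun x => by
    rw [norm_mul, Complex.norm_real, Complex.norm_real, Real.norm_eq_abs, Real.norm_eq_abs]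
  have hsinc : ∀ x : E, |Real.sinc (Real.pi * (ρ * x j))| ≤ 1 := fun x => Real.abs_sinc_le_one _
  refine ⟨fun x => (g (x i) : ℂ) * (Real.sinc (Real.pi * (ρ * x j)) : ℂ), ?_, fun x => ?_,
    ⟨EuclideanSpace.single i t, ?_⟩, fun p hp => ?_⟩
  · have hspec := (hg (EuclideanSpace.single i 1)).mul
      (isTrigLimit_sinc_inner (EuclideanSpace.single j (1 : ℝ)) ρ 0)
    simp only [EuclideanSpace.inner_single_left, map_one, one_mul, sub_zero, abs_of_pos hρ]
      at hspec
    refine hspec.mono ?_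
    rw [add_div]
    exact symmSegment_add_symmSegment_subset (by simp) (by simp) (by positivity) hρ.le
  · rw [hnorm]
    exact mul_le_one₀ (hg1 _) (abs_nonneg _) (hsinc x)
  · simpa [hij.symm] using ht
  · rw [hnorm]
    rcases lt_or_ge R |p i - x₀| with hout | hin
    · exact (mul_le_of_le_one_right (abs_nonneg _) (hsinc p)).trans (hgε _ hout)
    rcases le_total |p j| |p i| with hle | hle
    · rw [hg0 _ ((mem_dilatedSquares_iff hij hQpos hle).1 hp) hin, abs_zero, zero_mul]
      exact hε.le
    · refine (mul_le_of_le_one_left (abs_nonneg _) (hg1 _)).trans ?_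
      refine abs_sinc_pi_mul_le hε hεR ?_
      rw [abs_mul, abs_of_pos hρ]
      have hi := abs_sub_abs_le_abs_sub x₀ (p i)
      rw [abs_sub_comm] at hi
      gcongr
      linarith

lemma midpoint_add_smul_mem {W : Type*} [NormedAddCommGroup W] [NormedSpace ℝ W] {Ω : Set W}
    (hconv : Convex ℝ Ω) {α β u : W} (hα : α ∈ Ω) (hβ : β ∈ Ω) {d t : ℝ} (h : β - α = d • u)
    (ht : |t| ≤ d / 2) : midpoint ℝ α β + t • u ∈ Ω := by
  have hd : 0 ≤ d := by linarith [abs_nonneg t]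
  obtain ⟨c, hc, rfl⟩ : ∃ c, |c| ≤ 1 / 2 ∧ t = c * d := by
    rcases hd.eq_or_lt with rfl | hd
    · exact ⟨0, by norm_num, by simpa using ht⟩
    · refine ⟨t / d, ?_, (div_mul_cancel₀ t hd.ne').symm⟩
      rw [abs_div, abs_of_pos hd, div_le_iff₀ hd]
      linarith
  rw [abs_le] at hc
  convert hconv hα hβ (by linarith : 0 ≤ 1 / 2 - c) (by linarith : 0 ≤ 1 / 2 + c) (by ring) using 1
  rw [mul_smul, ← h, midpoint_eq_smul_add, invOf_eq_inv]
  module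

theorem notMem_of_isSamplingSet {Ω : Set E} (hbdd : Bornology.IsBounded Ω) (hconv : Convex ℝ Ω)
    (hint : (interior Ω).Nonempty) (hQpos : Q ⊆ Set.Ioi 0) (hQ : UniformlyDiscrete Q)
    (hij : i ≠ j) (hS : IsSamplingSet Ω (dilatedSquares Q)) :
    lowerUniformDensity (Q ∪ -Q) • EuclideanSpace.single i (1 : ℝ) ∉ Ω - Ω := by
  rintro ⟨β, hβ, α, hα, hβα⟩
  refine not_isSamplingSet_of_forall_exists_small (m := midpoint ℝ α β) hconv hbdd hint ?_
    (fun ρ hρ ε hε => exists_small_on_dilatedSquares hQpos hQ hij hρ hε) hS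
  rintro _ ⟨t, ht, rfl⟩
  exact midpoint_add_smul_mem hconv hα hβ hβα ht

end Necessity

/-- Corollary (ii), squares: for `D = [−1,1]²`, `P = Q·∂D` is a sampling set for `B_Ω`
iff `(d⁻(Q), 0) ∉ Ω − Ω` and `(0, d⁻(Q)) ∉ Ω − Ω`. -/
theorem dilated_squares_sampling
    (Ω : Set (EuclideanSpace ℝ (Fin 2))) (hΩcompact : IsCompact Ω) (hΩconvex : Convex ℝ Ω)
    (hΩpos : 0 < volume Ω)
    (D : Set (EuclideanSpace ℝ (Fin 2))) (hD : D = {x | ∀ i, x i ∈ Set.Icc (-1 : ℝ) 1})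
    (Q : Set ℝ) (hQpos : Q ⊆ Set.Ioi 0) (hQud : UniformlyDiscrete Q)
    (P : Set (EuclideanSpace ℝ (Fin 2))) (hP : P = {x | ∃ q ∈ Q, ∃ w ∈ frontier D, x = q • w}) :
    IsSamplingSet Ω P ↔
      ((WithLp.equiv 2 (Fin 2 → ℝ)).symm ![lowerUniformDensity (Q ∪ -Q), 0] ∉ Ω - Ω ∧
        (WithLp.equiv 2 (Fin 2 → ℝ)).symm ![0, lowerUniformDensity (Q ∪ -Q)] ∉ Ω - Ω) := by
  have h_int := interior_nonempty_of_volume_pos hΩconvex hΩpos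
  have hP' : P = dilatedSquares Q := by
    rw [hP, hD]
    exact dilatedSquares_eq hQpos
  have h_horizontal : (WithLp.equiv 2 (Fin 2 → ℝ)).symm ![lowerUniformDensity (Q ∪ -Q), 0] =
      lowerUniformDensity (Q ∪ -Q) • EuclideanSpace.single 0 (1 : ℝ) := by
    ext k
    fin_cases k <;> simp
  have h_vertical : (WithLp.equiv 2 (Fin 2 → ℝ)).symm ![0, lowerUniformDensity (Q ∪ -Q)] =
      lowerUniformDensity (Q ∪ -Q) • EuclideanSpace.single 1 (1 : ℝ) := by
    ext k
    fin_cases k <;> simp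
  rw [hP', h_horizontal, h_vertical]
  refine ⟨fun hS => ⟨?_, ?_⟩, fun h => ?_⟩
  · exact notMem_of_isSamplingSet hΩcompact.isBounded hΩconvex h_int hQpos hQud zero_ne_one hS
  · exact notMem_of_isSamplingSet hΩcompact.isBounded hΩconvex h_int hQpos hQud one_ne_zero hS
  · exact isSamplingSet_of_notMem hΩcompact hΩconvex (h_int.mono interior_subset) hQpos hQud
      (Fin.forall_fin_two.2 h)
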